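/- arXiv:1802.09930 — 5 statements merged into one kernel-verified Lean document; each statement's English description precedes it below -/
import Mathlib

section
/- Let V be a finite-dimensional real inner product space and let Σ₁, Σ₂ ⊆ V be linear subspaces with Σ₁ ∩ Σ₂ = {0}. Let G : V × V → ℂ be a measurable function of polynomial growth, i.e. there exist C > 0 and M ∈ ℕ with |G(u,w)| ≤ C·(1 + ‖u‖ + ‖w‖)^M for all u, w. Then the function (u,w) ↦ G(u,w)·exp(−(π/2)·‖u − w‖²) is integrable on Σ₁ × Σ₂ with respect to the product of the Lebesgue measures that the induced inner products determine on Σ₁ and Σ₂. -/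
open scoped Real
open MeasureTheory

/-!
Since `S₁ ∩ S₂ = 0`, the linear map `(u, w) ↦ u - w` is injective on the finite-dimensional space
`S₁ × S₂`, hence bounded below: `‖(u, w)‖ ≤ K ‖u - w‖`. The integrand is therefore dominated by a
polynomial in `‖p‖` times a genuine Gaussian `exp (-b ‖p‖²)` on `S₁ × S₂`. This decays faster than
`(1 + ‖p‖) ^ (-(dim + 1))` (lemma `one_add_pow_mul_exp_le`), which is integrable for the Haar measure
`volume` on `S₁ × S₂`.
-/

/-- An explicit bound showing that a Gaussian beats every power of `1 + t`. It comes from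
`x ^ k / k! ≤ exp x` at `x = 1 + t` and from completing the square in `t - b t²`. -/
lemma one_add_pow_mul_exp_le {b t : ℝ} (hb : 0 < b) (ht : 0 ≤ t) (k : ℕ) :
    (1 + t) ^ k * Real.exp (-(b * t ^ 2)) ≤ k.factorial * Real.exp (1 + 1 / (4 * b)) := by
  have h1 : (1 + t) ^ k ≤ k.factorial * Real.exp (1 + t) := by
    have := Real.pow_div_factorial_le_exp (1 + t) (by positivity) k
    rwa [div_le_iff₀' (by positivity)] at this
  have h2 : t - b * t ^ 2 ≤ 1 / (4 * b) := by
    rw [le_div_iff₀ (by positivity)]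
    nlinarith [sq_nonneg (2 * b * t - 1)]
  calc (1 + t) ^ k * Real.exp (-(b * t ^ 2))
      ≤ (k.factorial * Real.exp (1 + t)) * Real.exp (-(b * t ^ 2)) := by gcongr
    _ = k.factorial * Real.exp (1 + (t - b * t ^ 2)) := by
        rw [mul_assoc, ← Real.exp_add]; ring_nf
    _ ≤ _ := by gcongr

/-- Transversality of the two subspaces, in quantitative form. -/
lemma exists_norm_le_mul_norm_sub {V : Type*} [NormedAddCommGroup V] [InnerProductSpace ℝ V]
    [FiniteDimensional ℝ V] (S₁ S₂ : Submodule ℝ V) (h : S₁ ⊓ S₂ = ⊥) :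
    ∃ K : ℝ, 0 < K ∧ ∀ p : S₁ × S₂, ‖p‖ ≤ K * ‖(p.1 : V) - (p.2 : V)‖ := by
  let f : S₁ × S₂ →ₗ[ℝ] V :=
    S₁.subtype ∘ₗ LinearMap.fst ℝ S₁ S₂ - S₂.subtype ∘ₗ LinearMap.snd ℝ S₁ S₂
  have hf : LinearMap.ker f = ⊥ := by
    rw [LinearMap.ker_eq_bot']
    rintro ⟨u, w⟩ huw
    have huw' : (u : V) = w := sub_eq_zero.mp huw
    have hu : (u : V) ∈ S₁ ⊓ S₂ := ⟨u.2, huw' ▸ w.2⟩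
    rw [h, Submodule.mem_bot] at hu
    ext
    · exact hu
    · exact huw' ▸ hu
  obtain ⟨K, hK, hanti⟩ := f.exists_antilipschitzWith hf
  refine ⟨K, hK, fun p => ?_⟩
  simpa [f, norm_sub_rev (p.1 : V)] using hanti.le_mul_norm_sub p 0

/-- If `Σ₁ ∩ Σ₂ = {0}` and `G` is measurable of polynomial growth, then
`(u,w) ↦ G(u,w) exp(-(π/2)‖u-w‖²)` is integrable on `Σ₁ × Σ₂` for the Lebesgue measures
induced by the inner products. -/
theorem stmt_4 {V : Type*} [NormedAddCommGroup V] [InnerProductSpace ℝ V]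
    [FiniteDimensional ℝ V] [MeasurableSpace V] [BorelSpace V]
    (S₁ S₂ : Submodule ℝ V) (h : S₁ ⊓ S₂ = ⊥)
    [MeasurableSpace S₁] [BorelSpace S₁] [MeasurableSpace S₂] [BorelSpace S₂]
    (G : V × V → ℂ) (hG : Measurable G)
    (C : ℝ) (hCpos : 0 < C) (M : ℕ)
    (hbound : ∀ u w : V, ‖G (u, w)‖ ≤ C * (1 + ‖u‖ + ‖w‖) ^ M) :
    Integrable (fun p : S₁ × S₂ =>
      G ((p.1 : V), (p.2 : V)) *
        Complex.exp (-((π : ℂ) / 2) * ((‖(p.1 : V) - (p.2 : V)‖ ^ 2 : ℝ) : ℂ))) := by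
  obtain ⟨K, hK, hKle⟩ := exists_norm_le_mul_norm_sub S₁ S₂ h
  -- The bound `‖p‖ ≤ K ‖u - w‖` turns `(π / 2) ‖u - w‖²` into at least `b ‖p‖²`.
  set b : ℝ := π / 2 / K ^ 2 with hb_def
  have hb : 0 < b := by positivity
  set N : ℕ := Module.finrank ℝ (S₁ × S₂) + 1 with hN
  set A : ℝ := (M + N).factorial * Real.exp (1 + 1 / (4 * b)) with hA
  have : (volume : Measure (S₁ × S₂)).IsAddHaarMeasure :=
    Measure.prod.instIsAddHaarMeasure _ _
  have hint : Integrable (fun p : S₁ × S₂ => (1 + ‖p‖) ^ (-(N : ℝ))) :=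
    integrable_one_add_norm (by rw [hN]; push_cast; linarith)
  refine (hint.const_mul (C * 2 ^ M * A)).mono' ?_ (Filter.Eventually.of_forall fun p => ?_)
  · have h1 : Measurable (fun p : S₁ × S₂ => (p.1 : V)) :=
      continuous_subtype_val.measurable.comp measurable_fst
    have h2 : Measurable (fun p : S₁ × S₂ => (p.2 : V)) :=
      continuous_subtype_val.measurable.comp measurable_snd
    have h3 : Measurable (fun p : S₁ × S₂ =>
        Complex.exp (-((π : ℂ) / 2) * ((‖(p.1 : V) - (p.2 : V)‖ ^ 2 : ℝ) : ℂ))) := by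
      fun_prop
    exact ((hG.comp (h1.prodMk h2)).mul h3).aestronglyMeasurable
  · have hexp : ‖Complex.exp (-((π : ℂ) / 2) * ((‖(p.1 : V) - (p.2 : V)‖ ^ 2 : ℝ) : ℂ))‖
        ≤ Real.exp (-(b * ‖p‖ ^ 2)) := by
      have hre : -((π : ℂ) / 2) * ((‖(p.1 : V) - (p.2 : V)‖ ^ 2 : ℝ) : ℂ)
          = ((-(π / 2 * ‖(p.1 : V) - (p.2 : V)‖ ^ 2) : ℝ) : ℂ) := by
        push_cast; ring
      rw [hre, Complex.norm_exp, Complex.ofReal_re, Real.exp_le_exp, neg_le_neg_iff]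
      calc b * ‖p‖ ^ 2 ≤ b * (K * ‖(p.1 : V) - (p.2 : V)‖) ^ 2 := by
            gcongr; exact hKle p
        _ = π / 2 * ‖(p.1 : V) - (p.2 : V)‖ ^ 2 := by
            rw [hb_def]; field_simp
    have hGp : ‖G ((p.1 : V), (p.2 : V))‖ ≤ C * (2 ^ M * (1 + ‖p‖) ^ M) := by
      refine (hbound _ _).trans ?_
      rw [← mul_pow]
      have h1 : ‖(p.1 : V)‖ ≤ ‖p‖ := norm_fst_le p
      have h2 : ‖(p.2 : V)‖ ≤ ‖p‖ := norm_snd_le p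
      gcongr
      linarith
    have hdecay : (1 + ‖p‖) ^ M * Real.exp (-(b * ‖p‖ ^ 2)) ≤ A * (1 + ‖p‖) ^ (-(N : ℝ)) := by
      rw [Real.rpow_neg (by positivity), Real.rpow_natCast, ← div_eq_mul_inv,
        le_div_iff₀ (by positivity)]
      calc _ = (1 + ‖p‖) ^ (M + N) * Real.exp (-(b * ‖p‖ ^ 2)) := by ring
        _ ≤ A := one_add_pow_mul_exp_le hb (norm_nonneg p) _
    rw [norm_mul]
    calc _ ≤ (C * (2 ^ M * (1 + ‖p‖) ^ M)) * Real.exp (-(b * ‖p‖ ^ 2)) := by gcongr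
      _ = C * 2 ^ M * ((1 + ‖p‖) ^ M * Real.exp (-(b * ‖p‖ ^ 2))) := by ring
      _ ≤ C * 2 ^ M * (A * (1 + ‖p‖) ^ (-(N : ℝ))) := by gcongr
      _ = _ := by ring
end

section
/- Equip ℝ^{2n} with the standard symplectic form Ω(Z,Z') = Σ_{j=1}^n (u_j v'_j − v_j u'_j) for Z=(u,v), Z'=(u',v'), the standard inner product ⟨·,·⟩, and the standard basis e₁,…,e_n, f₁,…,f_n with Ω(e_i,f_j)=δ_{ij}. Let 1 ≤ d ≤ n and let ν₁,…,ν_d ∈ ℝ^{2n} be orthonormal vectors with Ω(ν_j,ν_k) = 0 for all j,k, such that span{ν₁,…,ν_d} ∩ span{e₁,…,e_n} = {0}. Define the n×d matrices A and B by A_{ij} = Ω(e_i,ν_j) and B_{ij} = ⟨e_i,ν_j⟩. Then the double integral I = ∫_{ℝ^d} ∫_{ℝ^n} exp( −(π/2)·‖Σ_{i=1}^n u_i e_i − Σ_{j=1}^d t_j ν_j‖² − π√−1·Ω(Σ_{i=1}^n u_i e_i, Σ_{j=1}^d t_j ν_j) ) du dt converges absolutely and satisfies I² · det(AᵀA + √−1·BᵀA)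 = 2^n. -/
/-!
Write `νⱼ = (bⱼ, aⱼ)`; then `A` and `B` have columns `aⱼ` and `bⱼ`, and `∑ tⱼνⱼ = (Bt, At)`. The
exponent of the kernel is `-(π/2)(|u - Bt|² + |At|²) - πi u·At`, so for fixed `t` the integral over
`u` is an elementary Gaussian (`integral_fiber`), equal to `2^(n/2) exp(-π tᵀMt)` with
`M = AᵀA + i BᵀA`. Transversality to `span{eᵢ}` makes `A` injective, so `AᵀA` is positive definite;
isotropy makes `BᵀA` symmetric. A simultaneous diagonalization of the two
(`exists_simultaneous_diagonalization`) reduces the remaining integral to one-dimensional Gaussians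
and gives `(∫ exp(-π tᵀMt) dt)² det M = 1` (`integral_cexp_neg_pi_quadratic`).

Absolute convergence follows from Tonelli: integrating the absolute value of the kernel over `u`
leaves `2^(n/2) exp(-(π/2)|At|²)`, which is integrable by the same lemma applied to `AᵀA / 2`.
-/

open scoped Real
open MeasureTheory

/-- Points of `ℝ^{2n}` written as pairs `Z = (u, v)`. -/
abbrev RR2 (n : ℕ) := (Fin n → ℝ) × (Fin n → ℝ)

/-- The standard symplectic form `Ω(Z,Z') = Σ_j (u_j v'_j - v_j u'_j)` on `ℝ^{2n}`. -/
def stdSymp {n : ℕ} (Z Z' : RR2 n) : ℝ := ∑ j, (Z.1 j * Z'.2 j - Z.2 j * Z'.1 j)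

/-- The standard inner product on `ℝ^{2n}`. -/
def stdInner {n : ℕ} (Z Z' : RR2 n) : ℝ := ∑ j, Z.1 j * Z'.1 j + ∑ j, Z.2 j * Z'.2 j

/-- The standard basis vectors `e_i` (the `u`-directions). -/
def eVec {n : ℕ} (i : Fin n) : RR2 n := (Pi.single i 1, 0)

/-- The standard basis vectors `f_i` (the `v`-directions). -/
def fVec {n : ℕ} (i : Fin n) : RR2 n := (0, Pi.single i 1)

/-- The model Bergman kernel integrand
`exp(-(π/2)‖Σᵢ uᵢ eᵢ - Σⱼ tⱼ νⱼ‖² - π √-1 Ω(Σᵢ uᵢ eᵢ, Σⱼ tⱼ νⱼ))`,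
as a function of `(t, u) ∈ ℝ^d × ℝ^n`. -/
noncomputable def modelKernel {n d : ℕ} (ν : Fin d → RR2 n)
    (t : Fin d → ℝ) (u : Fin n → ℝ) : ℂ :=
  Complex.exp
    (-((π : ℂ) / 2) *
        ((stdInner ((∑ i, u i • eVec i) - ∑ j, t j • ν j)
            ((∑ i, u i • eVec i) - ∑ j, t j • ν j) : ℝ) : ℂ)
      - (π : ℂ) * Complex.I *
        ((stdSymp (∑ i, u i • eVec i) (∑ j, t j • ν j) : ℝ) : ℂ))

open scoped MatrixOrder in
open Matrix in
/-- A positive definite form and a symmetric form are diagonalized by one congruence: for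
`S = CᵀC`, take `P = C⁻¹U` with `U` orthogonal diagonalizing `C⁻ᵀTC⁻¹`. -/
theorem exists_simultaneous_diagonalization {d : ℕ} {S T : Matrix (Fin d) (Fin d) ℝ}
    (hS : S.PosDef) (hT : T.IsHermitian) :
    ∃ (P : Matrix (Fin d) (Fin d) ℝ) (l : Fin d → ℝ), P.det ≠ 0 ∧
      Pᵀ * S * P = 1 ∧ Pᵀ * T * P = diagonal l := by
  obtain ⟨C, hC⟩ := CStarAlgebra.nonneg_iff_eq_star_mul_self.mp hS.posSemidef.nonneg
  rw [star_eq_conjTranspose, conjTranspose_eq_transpose_of_trivial] at hC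
  have hCdet : C.det ≠ 0 := by
    intro h
    have := hS.det_pos
    simp [hC, h] at this
  have hCu : IsUnit C.det := hCdet.isUnit
  have hT' : ((C⁻¹)ᵀ * T * C⁻¹).IsHermitian := by
    simpa [conjTranspose_eq_transpose_of_trivial] using
      isHermitian_conjTranspose_mul_mul (C⁻¹) hT
  have hU := hT'.conjStarAlgAut_star_eigenvectorUnitary
  rw [Unitary.conjStarAlgAut_star_apply] at hU
  set U : Matrix (Fin d) (Fin d) ℝ := (hT'.eigenvectorUnitary : Matrix (Fin d) (Fin d) ℝ)
  have hUU : Uᵀ * U = 1 := by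
    have := Unitary.coe_star_mul_self hT'.eigenvectorUnitary
    simpa [star_eq_conjTranspose, conjTranspose_eq_transpose_of_trivial] using this
  refine ⟨C⁻¹ * U, hT'.eigenvalues, ?_, ?_, ?_⟩
  · have : U.det ≠ 0 := by
      intro h
      have := congrArg Matrix.det hUU
      simp [h] at this
    rw [det_mul]
    exact mul_ne_zero (by simpa [det_nonsing_inv] using hCdet) this
  · have h1 : C * C⁻¹ = 1 := mul_nonsing_inv C hCu
    calc (C⁻¹ * U)ᵀ * S * (C⁻¹ * U) = Uᵀ * (C * C⁻¹)ᵀ * (C * C⁻¹) * U := by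
          rw [hC]; simp only [transpose_mul, Matrix.mul_assoc]
      _ = 1 := by rw [h1]; simp [hUU]
  · have : (C⁻¹ * U)ᵀ * T * (C⁻¹ * U) = star U * ((C⁻¹)ᵀ * T * C⁻¹) * U := by
      rw [star_eq_conjTranspose, conjTranspose_eq_transpose_of_trivial]
      simp only [transpose_mul, Matrix.mul_assoc]
    rw [this]
    simpa [Function.comp_def] using hU

open Matrix in
/-- The Gaussian integral with complex symmetric matrix `M = S + iT`, `S` positive definite:
`t ↦ exp(-π tᵀMt)` is integrable, and the square of its integral is `1 / det M`. -/
theorem integral_cexp_neg_pi_quadratic {d : ℕ} {S T : Matrix (Fin d) (Fin d) ℝ}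
    (hS : S.PosDef) (hT : T.IsHermitian) :
    Integrable (fun t : Fin d → ℝ =>
      Complex.exp (-π * ((t ⬝ᵥ S *ᵥ t : ℝ) + Complex.I * (t ⬝ᵥ T *ᵥ t : ℝ)))) ∧
    (∫ t : Fin d → ℝ,
      Complex.exp (-π * ((t ⬝ᵥ S *ᵥ t : ℝ) + Complex.I * (t ⬝ᵥ T *ᵥ t : ℝ)))) ^ 2 *
      (S.map Complex.ofReal + Complex.I • T.map Complex.ofReal).det = 1 := by
  obtain ⟨P, l, hP, hPS, hPT⟩ := exists_simultaneous_diagonalization hS hT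
  set f : (Fin d → ℝ) → ℂ := fun t =>
      Complex.exp (-π * ((t ⬝ᵥ S *ᵥ t : ℝ) + Complex.I * (t ⬝ᵥ T *ᵥ t : ℝ))) with hf
  set b : Fin d → ℂ := fun i => π * (1 + Complex.I * l i) with hb
  have hbre : ∀ i, 0 < (b i).re := fun i => by simp [hb, Real.pi_pos]
  have hquad : ∀ (Q : Matrix (Fin d) (Fin d) ℝ) (s : Fin d → ℝ),
      (P *ᵥ s) ⬝ᵥ Q *ᵥ (P *ᵥ s) = s ⬝ᵥ (Pᵀ * Q * P) *ᵥ s := by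
    intro Q s
    rw [← vecMul_transpose P s, ← dotProduct_mulVec, vecMul_transpose, mulVec_mulVec, mulVec_mulVec]
  have hfP : ∀ s : Fin d → ℝ, f (toLin' P s) =
      Complex.exp (-∑ i, b i * (s i : ℂ) ^ 2 + ∑ i, (0 : Fin d → ℂ) i * s i) := by
    intro s
    simp only [hf, toLin'_apply, hquad, hPS, hPT, one_mulVec, hb]
    simp only [dotProduct, mulVec_diagonal]
    congr 1
    push_cast
    simp only [Pi.zero_apply, zero_mul, Finset.sum_const_zero, add_zero, Finset.mul_sum,
      ← Finset.sum_add_distrib, ← Finset.sum_neg_distrib]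
    exact Finset.sum_congr rfl fun i _ => by ring
  have hmap := Real.map_matrix_volume_pi_eq_smul_volume_pi hP
  have hcont : Continuous f := by
    simp only [hf, dotProduct, mulVec]
    fun_prop
  have hlin : Continuous (toLin' P) := (toLin' P).continuous_of_finiteDimensional
  have hfs : ∀ μ : Measure (Fin d → ℝ), AEStronglyMeasurable f μ :=
    fun μ => hcont.aestronglyMeasurable
  have hint : Integrable f := by
    have h := GaussianFourier.integrable_cexp_neg_sum_mul_add hbre 0
    simp only [← hfP] at h
    have h2 := (integrable_map_measure (hfs _) hlin.aemeasurable).mpr h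
    rw [hmap] at h2
    rwa [integrable_smul_measure (by simpa using hP) ENNReal.ofReal_ne_top] at h2
  refine ⟨hint, ?_⟩
  have hI : (∏ i, (π / b i) ^ (1 / 2 : ℂ)) = (|P.det|⁻¹ : ℝ) * ∫ t, f t := by
    have h := GaussianFourier.integral_cexp_neg_sum_mul_add hbre 0
    simp only [← hfP] at h
    rw [← integral_map hlin.aemeasurable (hfs _), hmap, integral_smul_measure,
      ENNReal.toReal_ofReal (abs_nonneg _)] at h
    simpa [abs_inv] using h.symm
  have hdet : ((P.det : ℝ) : ℂ) ^ 2 * (S.map Complex.ofReal + Complex.I • T.map Complex.ofReal).det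
      = ∏ i, (1 + Complex.I * l i) := by
    have h1 : (Pᵀ.map Complex.ofReal) *
        (S.map Complex.ofReal + Complex.I • T.map Complex.ofReal) * P.map Complex.ofReal
        = diagonal fun i => (1 + Complex.I * l i) := by
      have e1 := congrArg (fun M => M.map Complex.ofRealHom) hPS
      have e2 := congrArg (fun M => M.map Complex.ofRealHom) hPT
      simp only [Matrix.map_mul] at e1 e2
      simp only [Matrix.mul_add, Matrix.add_mul, Matrix.mul_smul, Matrix.smul_mul]
      change _ * S.map Complex.ofRealHom * _ + Complex.I • (_ * T.map Complex.ofRealHom * _) = _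
      -- `erw`: `Complex.ofReal` and the coercion of `Complex.ofRealHom` agree only by unfolding.
      erw [e1, e2]
      ext i j
      by_cases hij : i = j
      · subst hij; simp
      · simp [hij]
    have h2 := congrArg Matrix.det h1
    have h3 : (P.map Complex.ofReal).det = (P.det : ℂ) := (Complex.ofRealHom.map_det P).symm
    rw [det_mul, det_mul, transpose_map, det_transpose, h3, det_diagonal] at h2
    rw [← h2]; ring
  have hsq : (∏ i, (π / b i) ^ (1 / 2 : ℂ)) ^ 2 * ∏ i, (1 + Complex.I * l i) = 1 := by
    rw [← Finset.prod_pow, ← Finset.prod_mul_distrib]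
    refine Finset.prod_eq_one fun i _ => ?_
    have hne : (1 + Complex.I * l i) ≠ 0 := by
      intro h
      have := congrArg Complex.re h
      simp at this
    have hpi : (π : ℂ) ≠ 0 := by exact_mod_cast Real.pi_ne_zero
    rw [← Complex.cpow_nat_mul]
    simp only [hb]
    norm_num
    field_simp
  have hP' : ((P.det : ℝ) : ℂ) ≠ 0 := by exact_mod_cast hP
  have habs : ((|P.det|⁻¹ : ℝ) : ℂ) ^ 2 * ((P.det : ℝ) : ℂ) ^ 2 = 1 := by
    rw [← Complex.ofReal_pow, ← Complex.ofReal_pow, ← Complex.ofReal_mul, inv_pow, sq_abs,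
      inv_mul_cancel₀ (pow_ne_zero 2 hP), Complex.ofReal_one]
  rw [hI, ← hdet] at hsq
  linear_combination hsq - (∫ t, f t) ^ 2 *
    (S.map Complex.ofReal + Complex.I • T.map Complex.ofReal).det * habs

/-- Separates the `u`-dependence of the fibre integrand into the form treated by
`GaussianFourier.integral_cexp_neg_mul_sum_add`. -/
theorem cexp_complete_square {n : ℕ} (x y u : Fin n → ℝ) (z : ℂ) :
    Complex.exp (-((π : ℂ) / 2) * ((∑ i, (u i - x i) ^ 2 + ∑ i, y i ^ 2 : ℝ) : ℂ)
      - z * ((∑ i, u i * y i : ℝ) : ℂ)) =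
    Complex.exp (-((π : ℂ) / 2) * ((∑ i, x i ^ 2 + ∑ i, y i ^ 2 : ℝ) : ℂ)) *
    Complex.exp (-((π : ℂ) / 2) * ∑ i, (u i : ℂ) ^ 2 + ∑ i, (π * x i - z * y i) * u i) := by
  rw [← Complex.exp_add]
  congr 1
  push_cast
  simp only [Finset.mul_sum, mul_add, ← Finset.sum_add_distrib, ← Finset.sum_sub_distrib]
  exact Finset.sum_congr rfl fun i _ => by ring

theorem integrable_fiber {n : ℕ} (x y : Fin n → ℝ) (z : ℂ) :
    Integrable (fun u : Fin n → ℝ =>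
      Complex.exp (-((π : ℂ) / 2) * ((∑ i, (u i - x i) ^ 2 + ∑ i, y i ^ 2 : ℝ) : ℂ)
        - z * ((∑ i, u i * y i : ℝ) : ℂ))) := by
  simp only [cexp_complete_square]
  refine Integrable.const_mul (GaussianFourier.integrable_cexp_neg_mul_sum_add ?_ _) _
  have : ((π : ℂ) / 2).re = π / 2 := by simp
  rw [this]; positivity

/-- The integral over the Lagrangian directions `u`, with `x = Bt` and `y = At`. The value
`z = πi` gives the kernel itself and `z = 0` gives its absolute value. -/
theorem integral_fiber {n : ℕ} (x y : Fin n → ℝ) (z : ℂ) :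
    ∫ u : Fin n → ℝ,
      Complex.exp (-((π : ℂ) / 2) * ((∑ i, (u i - x i) ^ 2 + ∑ i, y i ^ 2 : ℝ) : ℂ)
        - z * ((∑ i, u i * y i : ℝ) : ℂ)) =
    (2 : ℂ) ^ ((n : ℂ) / 2) *
      Complex.exp ((z ^ 2 / (2 * π) - π / 2) * ((∑ i, y i ^ 2 : ℝ) : ℂ)
        - z * ((∑ i, x i * y i : ℝ) : ℂ)) := by
  have hpi : (π : ℂ) ≠ 0 := by exact_mod_cast Real.pi_ne_zero
  have hre : 0 < ((π : ℂ) / 2).re := by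
    have : ((π : ℂ) / 2).re = π / 2 := by simp
    rw [this]; positivity
  simp only [cexp_complete_square]
  rw [integral_const_mul, GaussianFourier.integral_cexp_neg_mul_sum_add hre, mul_left_comm,
    ← Complex.exp_add, Fintype.card_fin]
  congr 1
  · congr 1
    field_simp
  · congr 1
    push_cast
    simp only [Finset.mul_sum, Finset.sum_div, mul_add, ← Finset.sum_add_distrib,
      ← Finset.sum_sub_distrib]
    exact Finset.sum_congr rfl fun i _ => by field_simp; ring


theorem sum_smul_eVec {n : ℕ} (u : Fin n → ℝ) : ∑ i, u i • eVec i = ((u, 0) : RR2 n) := by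
  ext i <;> simp [eVec, Prod.fst_sum, Prod.snd_sum, Finset.sum_apply, Pi.single_apply]

theorem stdSymp_eVec {n : ℕ} (i : Fin n) (Z : RR2 n) : stdSymp (eVec i) Z = Z.2 i := by
  simp [stdSymp, eVec, Pi.single_apply]

theorem stdInner_eVec {n : ℕ} (i : Fin n) (Z : RR2 n) : stdInner (eVec i) Z = Z.1 i := by
  simp [stdInner, eVec, Pi.single_apply]

open Matrix in
theorem sum_smul_eq_mulVec {n d : ℕ} {ν : Fin d → RR2 n} {A B : Matrix (Fin n) (Fin d) ℝ}
    (hA : ∀ i j, A i j = (ν j).2 i) (hB : ∀ i j, B i j = (ν j).1 i) (t : Fin d → ℝ) :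
    ∑ j, t j • ν j = ((B *ᵥ t, A *ᵥ t) : RR2 n) := by
  ext i <;> simp [Prod.fst_sum, Prod.snd_sum, Finset.sum_apply, mulVec, dotProduct, hA, hB,
    mul_comm]

open Matrix in
theorem modelKernel_eq {n d : ℕ} {ν : Fin d → RR2 n} {A B : Matrix (Fin n) (Fin d) ℝ}
    (hA : ∀ i j, A i j = (ν j).2 i) (hB : ∀ i j, B i j = (ν j).1 i)
    (t : Fin d → ℝ) (u : Fin n → ℝ) :
    modelKernel ν t u =
      Complex.exp (-((π : ℂ) / 2) *
          ((∑ i, (u i - (B *ᵥ t) i) ^ 2 + ∑ i, (A *ᵥ t) i ^ 2 : ℝ) : ℂ)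
        - π * Complex.I * ((∑ i, u i * (A *ᵥ t) i : ℝ) : ℂ)) := by
  simp only [modelKernel, sum_smul_eVec, sum_smul_eq_mulVec hA hB, stdInner, stdSymp]
  simp [sq]

open Matrix in
/-- If `At = 0` then `∑ tⱼνⱼ = (Bt, 0)` lies in both subspaces, hence vanishes. -/
theorem mulVec_injective_of_transverse {n d : ℕ} {ν : Fin d → RR2 n}
    {A B : Matrix (Fin n) (Fin d) ℝ}
    (hA : ∀ i j, A i j = (ν j).2 i) (hB : ∀ i j, B i j = (ν j).1 i)
    (hν : LinearIndependent ℝ ν)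
    (hspan : Submodule.span ℝ (Set.range ν) ⊓
        Submodule.span ℝ (Set.range (eVec (n := n))) = ⊥) :
    Function.Injective A.mulVec := by
  refine (injective_iff_map_eq_zero A.mulVecLin).mpr fun t ht => ?_
  have h1 : ∑ j, t j • ν j ∈ Submodule.span ℝ (Set.range ν) :=
    Submodule.sum_mem _ fun j _ => Submodule.smul_mem _ _ (Submodule.subset_span ⟨j, rfl⟩)
  have h2 : ∑ j, t j • ν j ∈ Submodule.span ℝ (Set.range (eVec (n := n))) := by
    rw [sum_smul_eq_mulVec hA hB, show A *ᵥ t = 0 from ht, ← sum_smul_eVec]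
    exact Submodule.sum_mem _ fun j _ => Submodule.smul_mem _ _ (Submodule.subset_span ⟨j, rfl⟩)
  have h3 : ∑ j, t j • ν j = 0 := by
    have := Submodule.mem_inf.mpr ⟨h1, h2⟩
    rwa [hspan, Submodule.mem_bot] at this
  exact funext (Fintype.linearIndependent_iff.mp hν t h3)

theorem linearIndependent_of_orthonormal {n d : ℕ} {ν : Fin d → RR2 n}
    (hortho : ∀ j k, stdInner (ν j) (ν k) = if j = k then 1 else 0) :
    LinearIndependent ℝ ν := by
  refine Fintype.linearIndependent_iff.mpr fun t ht k => ?_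
  have h1 : stdInner (∑ j, t j • ν j) (ν k) = ∑ j, t j * stdInner (ν j) (ν k) := by
    simp only [stdInner, Prod.fst_sum, Prod.snd_sum, Finset.sum_apply, Prod.smul_fst,
      Prod.smul_snd, Pi.smul_apply, smul_eq_mul, Finset.sum_mul, mul_add, Finset.mul_sum,
      Finset.sum_add_distrib]
    congr 1 <;> rw [Finset.sum_comm] <;> simp only [mul_assoc]
  simp only [ht, hortho] at h1
  simpa [stdInner] using h1.symm

/-- Evaluation of the model Gaussian integral over a Lagrangian subspace and an isotropic
subspace of dimension `d` meeting it only at `0`: the double integral `I` converges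
absolutely and `I² · det(AᵀA + √-1 BᵀA) = 2ⁿ`. -/
theorem stmt_6 (n d : ℕ) (hd : 1 ≤ d) (hdn : d ≤ n) (ν : Fin d → RR2 n)
    (hortho : ∀ j k, stdInner (ν j) (ν k) = if j = k then 1 else 0)
    (hiso : ∀ j k, stdSymp (ν j) (ν k) = 0)
    (hspan : Submodule.span ℝ (Set.range ν) ⊓
        Submodule.span ℝ (Set.range (eVec (n := n))) = ⊥)
    (A B : Matrix (Fin n) (Fin d) ℝ)
    (hA : ∀ i j, A i j = stdSymp (eVec i) (ν j))
    (hB : ∀ i j, B i j = stdInner (eVec i) (ν j)) :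
    Integrable (fun p : (Fin d → ℝ) × (Fin n → ℝ) => modelKernel ν p.1 p.2)
    ∧ (∫ t : Fin d → ℝ, ∫ u : Fin n → ℝ, modelKernel ν t u) ^ 2
        * ((A.transpose * A).map Complex.ofReal
            + Complex.I • (B.transpose * A).map Complex.ofReal).det
      = 2 ^ n := by
  have hA' : ∀ i j, A i j = (ν j).2 i := fun i j => by rw [hA, stdSymp_eVec]
  have hB' : ∀ i j, B i j = (ν j).1 i := fun i j => by rw [hB, stdInner_eVec]
  have hinj := mulVec_injective_of_transverse hA' hB' (linearIndependent_of_orthonormal hortho) hspan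
  have hS : (A.transpose * A).PosDef := by
    have := Matrix.PosDef.conjTranspose_mul_self A hinj
    rwa [Matrix.conjTranspose_eq_transpose_of_trivial] at this
  -- The isotropy condition `Ω(νⱼ, νₖ) = 0` says exactly that `BᵀA` is symmetric.
  have hT : (B.transpose * A).IsHermitian := by
    ext j k
    have h := hiso j k
    simp only [stdSymp, Finset.sum_sub_distrib, sub_eq_zero] at h
    simp only [Matrix.conjTranspose_apply, Matrix.mul_apply, Matrix.transpose_apply, hA', hB',
      star_trivial, h]
    exact Finset.sum_congr rfl fun i _ => mul_comm _ _
  have hqS : ∀ t : Fin d → ℝ,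
      dotProduct t ((A.transpose * A).mulVec t) = ∑ i, (A.mulVec t) i ^ 2 := fun t => by
    rw [← Matrix.mulVec_mulVec, Matrix.dotProduct_mulVec, Matrix.vecMul_transpose]
    simp [dotProduct, sq]
  have hqT : ∀ t : Fin d → ℝ,
      dotProduct t ((B.transpose * A).mulVec t) = ∑ i, (B.mulVec t) i * (A.mulVec t) i :=
    fun t => by
      rw [← Matrix.mulVec_mulVec, Matrix.dotProduct_mulVec, Matrix.vecMul_transpose]
      simp [dotProduct]
  have hpi : (π : ℂ) ≠ 0 := by exact_mod_cast Real.pi_ne_zero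
  obtain ⟨-, hval⟩ := integral_cexp_neg_pi_quadratic hS hT
  refine ⟨?_, ?_⟩
  · have hcont : Continuous fun p : (Fin d → ℝ) × (Fin n → ℝ) => modelKernel ν p.1 p.2 := by
      simp only [modelKernel_eq hA' hB', Matrix.mulVec, dotProduct]
      fun_prop
    have hnorm : ∀ t u, ((‖modelKernel ν t u‖ : ℝ) : ℂ) =
        Complex.exp (-((π : ℂ) / 2) *
          ((∑ i, (u i - (B.mulVec t) i) ^ 2 + ∑ i, (A.mulVec t) i ^ 2 : ℝ) : ℂ)
          - 0 * ((∑ i, u i * (A.mulVec t) i : ℝ) : ℂ)) := fun t u => by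
      rw [modelKernel_eq hA' hB', Complex.norm_exp, Complex.ofReal_exp]
      congr 1
      generalize (∑ i, (u i - (B.mulVec t) i) ^ 2 + ∑ i, (A.mulVec t) i ^ 2 : ℝ) = a
      generalize (∑ i, u i * (A.mulVec t) i : ℝ) = b
      simp
    refine (integrable_prod_iff hcont.aestronglyMeasurable).mpr ⟨.of_forall fun t => ?_, ?_⟩
    · simp only [modelKernel_eq hA' hB']
      exact integrable_fiber _ _ _
    -- The fibre integral of the absolute value is `2^(n/2) exp(-(π/2)|At|²)`: the Gaussian with
    -- real matrix `AᵀA/2`.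
    · have hhalf : ((1 / 2 : ℝ) • (A.transpose * A)).PosDef := hS.smul (by norm_num)
      have h := (integral_cexp_neg_pi_quadratic hhalf Matrix.isHermitian_zero).1
      have h2 := (h.const_mul ((2 : ℂ) ^ ((n : ℂ) / 2))).re
      refine h2.congr (.of_forall fun t => ?_)
      have h3 : ((∫ u, ‖modelKernel ν t u‖ : ℝ) : ℂ) = (2 : ℂ) ^ ((n : ℂ) / 2) *
          Complex.exp (-((π : ℂ) / 2) * ((∑ i, (A.mulVec t) i ^ 2 : ℝ) : ℂ)) := by
        rw [← integral_complex_ofReal]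
        simp only [hnorm]
        rw [integral_fiber]
        congr 2
        ring
      have h4 := congrArg Complex.re h3
      rw [Complex.ofReal_re] at h4
      simp only
      rw [h4, Matrix.smul_mulVec, dotProduct_smul, hqS, Matrix.zero_mulVec, dotProduct_zero]
      simp only [RCLike.re_to_complex]
      congr 3
      push_cast
      simp only [smul_eq_mul]
      push_cast
      ring
  · have hinner : ∀ t : Fin d → ℝ, ∫ u, modelKernel ν t u = (2 : ℂ) ^ ((n : ℂ) / 2) *
        Complex.exp (-π * ((dotProduct t ((A.transpose * A).mulVec t) : ℝ) +
          Complex.I * (dotProduct t ((B.transpose * A).mulVec t) : ℝ))) := fun t => by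
      simp only [modelKernel_eq hA' hB']
      rw [integral_fiber, hqS, hqT]
      congr 2
      rw [mul_pow, Complex.I_sq]
      field_simp
      ring
    simp only [hinner]
    rw [integral_const_mul, mul_pow, mul_assoc, hval, mul_one, ← Complex.cpow_nat_mul]
    have : ((2 : ℕ) : ℂ) * ((n : ℂ) / 2) = n := by push_cast; ring
    rw [this, Complex.cpow_natCast]
end

section
/- Let p ≥ 1 be an integer and let g : ℍ → ℂ be a measurable function with ∫_{ℍ} |g(w)|² (Im w)^{2p−2} dA(w) < ∞. Then the function z ↦ ∫_{ℍ} g(w) · (z − conj(w))^{−2p} · (Im w)^{2p−2} dA(w) is well defined (the integrand is integrable for each z ∈ ℍ) and is holomorphic on ℍ. -/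
open MeasureTheory

/-!
Fix `δ > 0` and `R`, and consider `z` with `δ ≤ Im z` and `‖z‖ ≤ R`. For `w` in the upper half-plane
put `d = ‖z - conj w‖` and `y = Im w`. Then `d ≥ Im z + y`, so `d ≥ δ` and `d ≥ y`, and the triangle
inequality gives `1 + ‖w‖ ≤ C * d` with `C = 1 + (R + 1) / δ`. With `q = p - 1` the kernel is thus
bounded by `y ^ (2q) * d ^ (-(2q + 2)) ≤ y ^ q * δ ^ (-q) * C ^ 2 * (1 + ‖w‖) ^ (-2)`, and
`a * b ≤ a ^ 2 + b ^ 2` dominates the integrand by a multiple of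
`‖g w‖ ^ 2 * y ^ (2q) + (1 + ‖w‖) ^ (-4)`, uniformly in `z` (`bergman_integrand_bound`). This
majorant is integrable, because `4` exceeds the real dimension of `ℂ`. The `z`-derivative of the
integrand is the integrand times `-2p / (z - conj w)`, which costs only a further factor `2p / δ`,
so differentiation under the integral sign applies.
-/

lemma im_add_im_le_norm_sub_conj (z w : ℂ) : z.im + w.im ≤ ‖z - (starRingEnd ℂ) w‖ := by
  have h := (le_abs_self _).trans (Complex.abs_im_le_norm (z - (starRingEnd ℂ) w))
  simpa using h

lemma one_add_norm_le_mul_norm_sub_conj {δ R : ℝ} (hδ : 0 < δ) {z w : ℂ} (hz : δ ≤ z.im)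
    (hzR : ‖z‖ ≤ R) (hw : 0 < w.im) :
    1 + ‖w‖ ≤ (1 + (R + 1) / δ) * ‖z - (starRingEnd ℂ) w‖ := by
  have hd := im_add_im_le_norm_sub_conj z w
  have hR : 0 ≤ R := (norm_nonneg z).trans hzR
  have h1 : ‖w‖ ≤ ‖z - (starRingEnd ℂ) w‖ + ‖z‖ := by
    have h := norm_sub_le z (z - (starRingEnd ℂ) w)
    rw [sub_sub_cancel, RCLike.norm_conj] at h
    linarith
  have h2 : R + 1 ≤ (R + 1) / δ * ‖z - (starRingEnd ℂ) w‖ := by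
    rw [div_mul_eq_mul_div, le_div_iff₀ hδ]
    exact mul_le_mul_of_nonneg_left (by linarith) (by linarith)
  linarith

/-- Domination of the integrand, uniform over `z` with `δ ≤ Im z` and `‖z‖ ≤ R`. -/
lemma bergman_integrand_bound {δ R : ℝ} (hδ : 0 < δ) {z w : ℂ} (hz : δ ≤ z.im)
    (hzR : ‖z‖ ≤ R) (hw : 0 < w.im) (q : ℕ) (a : ℂ) :
    ‖a * ((z - (starRingEnd ℂ) w) ^ (2 * q + 2))⁻¹ * (w.im : ℂ) ^ (2 * q)‖ ≤
      (δ ^ q)⁻¹ * (1 + (R + 1) / δ) ^ 2 *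
        (‖a‖ ^ 2 * w.im ^ (2 * q) + ((1 + ‖w‖) ^ 4)⁻¹) := by
  have hd := im_add_im_le_norm_sub_conj z w
  have hC := one_add_norm_le_mul_norm_sub_conj hδ hz hzR hw
  have hR : 0 ≤ R := (norm_nonneg z).trans hzR
  rw [norm_mul, norm_mul, norm_inv, norm_pow, norm_pow, Complex.norm_real,
    Real.norm_of_nonneg hw.le]
  set d := ‖z - (starRingEnd ℂ) w‖
  set C := 1 + (R + 1) / δ
  set y := w.im
  set N := 1 + ‖w‖
  have hN : 0 < N := by positivity
  have hd0 : 0 < d := by linarith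
  have hinv : (d ^ 2)⁻¹ ≤ C ^ 2 * (N ^ 2)⁻¹ := by
    rw [← div_eq_mul_inv, le_div_iff₀ (by positivity), inv_mul_le_iff₀ (by positivity)]
    calc N ^ 2 ≤ (C * d) ^ 2 := by gcongr
      _ = d ^ 2 * C ^ 2 := by ring
  have hδd : (d ^ q)⁻¹ ≤ (δ ^ q)⁻¹ := by
    gcongr
    linarith
  have hyd : y ^ q * (d ^ q)⁻¹ ≤ 1 := by
    rw [← div_eq_mul_inv, div_le_one (by positivity)]
    gcongr
    linarith
  have hy0 : 0 < y := hw
  calc ‖a‖ * (d ^ (2 * q + 2))⁻¹ * y ^ (2 * q)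
      = (‖a‖ * y ^ q) * (y ^ q * (d ^ q)⁻¹) * (d ^ q)⁻¹ * (d ^ 2)⁻¹ := by
        rw [pow_add, two_mul, pow_add, pow_add, mul_inv, mul_inv]; ring
    _ ≤ (‖a‖ * y ^ q) * 1 * (δ ^ q)⁻¹ * (C ^ 2 * (N ^ 2)⁻¹) := by gcongr
    _ = (δ ^ q)⁻¹ * C ^ 2 * ((‖a‖ * y ^ q) * (N ^ 2)⁻¹) := by ring
    _ ≤ (δ ^ q)⁻¹ * C ^ 2 * ((‖a‖ * y ^ q) ^ 2 + ((N ^ 2)⁻¹) ^ 2) := by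
        gcongr
        nlinarith [sq_nonneg (‖a‖ * y ^ q - (N ^ 2)⁻¹), sq_nonneg (‖a‖ * y ^ q),
          sq_nonneg ((N ^ 2)⁻¹)]
    _ = _ := by
        rw [inv_pow, ← pow_mul N, mul_pow, ← pow_mul y, mul_comm q 2]

lemma integrable_inv_one_add_norm_pow_four : Integrable (fun w : ℂ => ((1 + ‖w‖) ^ 4)⁻¹) := by
  have h := integrable_one_add_norm (E := ℂ) (μ := volume) (r := 4)
    (by rw [Complex.finrank_real_complex]; norm_num)
  refine h.congr (Filter.Eventually.of_forall fun w => ?_)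
  have hN : (0 : ℝ) ≤ 1 + ‖w‖ := by positivity
  simp only
  rw [Real.rpow_neg hN]
  norm_cast

/-- The Bergman projection integral of a weighted-`L²` function `g` against the kernel
`(z - conj w)^{-2p} (Im w)^{2p-2}` is well defined and holomorphic on the upper half-plane. -/
theorem stmt_9 (p : ℕ) (hp : 1 ≤ p) (g : ℂ → ℂ) (hg : Measurable g)
    (hint : IntegrableOn (fun w : ℂ => ‖g w‖ ^ 2 * w.im ^ (2 * p - 2)) {z : ℂ | 0 < z.im}) :
    (∀ z ∈ {z : ℂ | 0 < z.im},
      IntegrableOn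
        (fun w : ℂ => g w * ((z - (starRingEnd ℂ) w) ^ (2 * p))⁻¹ * ((w.im : ℂ)) ^ (2 * p - 2))
        {z : ℂ | 0 < z.im})
    ∧ DifferentiableOn ℂ
        (fun z : ℂ => ∫ w in {z : ℂ | 0 < z.im},
          g w * ((z - (starRingEnd ℂ) w) ^ (2 * p))⁻¹ * ((w.im : ℂ)) ^ (2 * p - 2))
        {z : ℂ | 0 < z.im} := by
  obtain ⟨q, rfl⟩ : ∃ q, p = q + 1 := ⟨p - 1, by omega⟩
  have e1 : 2 * (q + 1) - 2 = 2 * q := by omega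
  have e2 : 2 * (q + 1) = 2 * q + 2 := by ring
  rw [e1] at hint ⊢
  rw [e2]
  have hS : MeasurableSet {z : ℂ | 0 < z.im} :=
    measurableSet_lt measurable_const Complex.measurable_im
  have hconj : Measurable (fun w : ℂ => (starRingEnd ℂ) w) := Complex.continuous_conj.measurable
  have him : Measurable (fun w : ℂ => (w.im : ℂ)) :=
    Complex.measurable_ofReal.comp Complex.measurable_im
  have hmeas : ∀ z : ℂ, Measurable (fun w : ℂ =>
      g w * ((z - (starRingEnd ℂ) w) ^ (2 * q + 2))⁻¹ * (w.im : ℂ) ^ (2 * q)) := fun z =>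
    (hg.mul ((measurable_const.sub hconj).pow_const _).inv).mul (him.pow_const _)
  have hB : ∀ K : ℝ, IntegrableOn (fun w : ℂ =>
      K * (‖g w‖ ^ 2 * w.im ^ (2 * q) + ((1 + ‖w‖) ^ 4)⁻¹)) {z : ℂ | 0 < z.im} := fun K =>
    (hint.add integrable_inv_one_add_norm_pow_four.integrableOn).const_mul K
  have hI : ∀ z ∈ {z : ℂ | 0 < z.im}, IntegrableOn (fun w : ℂ =>
      g w * ((z - (starRingEnd ℂ) w) ^ (2 * q + 2))⁻¹ * (w.im : ℂ) ^ (2 * q))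
      {z : ℂ | 0 < z.im} := by
    intro z hz
    refine Integrable.mono' (hB ((z.im ^ q)⁻¹ * (1 + (‖z‖ + 1) / z.im) ^ 2)) (hmeas z).aestronglyMeasurable ?_
    filter_upwards [ae_restrict_mem hS] with w hw
    exact bergman_integrand_bound hz le_rfl le_rfl hw q (g w)
  refine ⟨hI, fun z₀ hz₀ => ?_⟩
  have hz₀' : 0 < z₀.im := hz₀
  set δ : ℝ := z₀.im / 2 with hδdef
  have hδ : 0 < δ := by positivity
  have hball : ∀ z ∈ Metric.ball z₀ δ, δ ≤ z.im ∧ ‖z‖ ≤ ‖z₀‖ + δ := by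
    intro z hz
    rw [mem_ball_iff_norm] at hz
    have h1 := (neg_abs_le _).trans' (neg_le_neg (Complex.abs_im_le_norm (z - z₀)))
    have h2 := norm_sub_norm_le z z₀
    rw [Complex.sub_im] at h1
    constructor <;> linarith
  have key := hasDerivAt_integral_of_dominated_loc_of_deriv_le
    (μ := volume.restrict {z : ℂ | 0 < z.im}) (𝕜 := ℂ) (x₀ := z₀)
    (F := fun z w => g w * ((z - (starRingEnd ℂ) w) ^ (2 * q + 2))⁻¹ * (w.im : ℂ) ^ (2 * q))
    (F' := fun z w => (-(2 * q + 2 : ℂ) / (z - (starRingEnd ℂ) w)) *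
      (g w * ((z - (starRingEnd ℂ) w) ^ (2 * q + 2))⁻¹ * (w.im : ℂ) ^ (2 * q)))
    (bound := fun w => ((2 * q + 2) / δ) * (((δ ^ q)⁻¹ * (1 + ((‖z₀‖ + δ) + 1) / δ) ^ 2) *
        (‖g w‖ ^ 2 * w.im ^ (2 * q) + ((1 + ‖w‖) ^ 4)⁻¹)))
    (Metric.ball_mem_nhds z₀ hδ)
    (Filter.Eventually.of_forall fun z => (hmeas z).aestronglyMeasurable)
    (hI z₀ hz₀)
    ((measurable_const.div (measurable_const.sub hconj)).mul (hmeas z₀)).aestronglyMeasurable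
    ?_ ((hB _).const_mul _) ?_
  · exact key.2.differentiableAt.differentiableWithinAt
  · filter_upwards [ae_restrict_mem hS] with w hw z hz
    obtain ⟨h1, h2⟩ := hball z hz
    have hw' : 0 < w.im := hw
    have hd := im_add_im_le_norm_sub_conj z w
    rw [norm_mul]
    refine mul_le_mul ?_ (bergman_integrand_bound hδ h1 h2 hw q (g w)) (norm_nonneg _)
      (by positivity)
    have hn : ‖(2 * q + 2 : ℂ)‖ = 2 * q + 2 := by
      exact_mod_cast Complex.norm_natCast (2 * q + 2)
    rw [norm_div, norm_neg, hn]
    gcongr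
    linarith
  · filter_upwards [ae_restrict_mem hS] with w hw z hz
    have hw' : 0 < w.im := hw
    have hd := im_add_im_le_norm_sub_conj z w
    have hne : z - (starRingEnd ℂ) w ≠ 0 := by
      rw [← norm_pos_iff]
      linarith [(hball z hz).1]
    have hder := ((((hasDerivAt_id z).sub_const ((starRingEnd ℂ) w)).pow (2 * q + 2)).inv
      (pow_ne_zero _ hne)).const_mul (g w) |>.mul_const ((w.im : ℂ) ^ (2 * q))
    refine hder.congr_deriv ?_
    simp only [id, Pi.pow_apply]
    rw [show 2 * q + 2 - 1 = 2 * q + 1 by omega]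
    push_cast
    field_simp
    ring
end

section
/- Let p ≥ 1 be an integer and let f : ℍ → ℂ be holomorphic on ℍ = {z ∈ ℂ : Im z > 0} with ∫_{ℍ} |f(w)|² (Im w)^{2p−2} dA(w) < ∞. Then for every z ∈ ℍ, f(z) = c_p · ∫_{ℍ} f(w) · (z − conj(w))^{−2p} · (Im w)^{2p−2} dA(w), where c_p = (−1)^p · 2^{2p−2} · (2p−1) / π. -/
/-!
Fix `z` in the upper half-plane. The Cayley transform `w = cayley z ζ` sends the unit disc onto
the half-plane and `0` to `z`. With `y = Im z` one has
`Im w = y (1 - |ζ|²) / |1 - ζ|²`, `z - conj w = 2 i y / conj (1 - ζ)` and Jacobian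
`4 y² / |1 - ζ|⁴`, so in the disc coordinate all anti-holomorphic factors cancel and the integral
becomes a constant times `∫ g(ζ) (1 - |ζ|²) ^ (2 * p - 2) dA(ζ)`, where
`g(ζ) = f(cayley z ζ) / (1 - ζ) ^ (2 * p)` is holomorphic and `g 0 = f z`.

By polar coordinates and the mean value property (`integral_disc`) this is `f z * π / (2 * p - 1)`.
Fubini requires the disc integrand to be integrable: the same change of variables turns the
hypothesis into integrability of `‖g‖² (1 - |ζ|²) ^ (2 * p - 2)`, which dominates because the weighted
disc has finite mass.
-/

open MeasureTheory
open scoped Real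


open Complex Metric Set ComplexConjugate

/-- Integrability passes to polar coordinates; needed to apply Fubini there, since
`Complex.integral_comp_polarCoord_symm` only concerns the value of the integral. -/
theorem integrableOn_polarCoord_symm {F : ℂ → ℂ} (hF : Integrable F) :
    IntegrableOn (fun q : ℝ × ℝ => q.1 • F (Complex.polarCoord.symm q)) polarCoord.target := by
  have h1 : Integrable (fun q : ℝ × ℝ => F (measurableEquivRealProd.symm q)) :=
    (Complex.volume_preserving_equiv_real_prod.symm.integrable_comp_emb
      measurableEquivRealProd.symm.measurableEmbedding).2 hF
  have h2 := (integrableOn_image_iff_integrableOn_abs_det_fderiv_smul volume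
    _root_.polarCoord.open_target.measurableSet
    (fun q _ => (hasFDerivAt_polarCoord_symm q).hasFDerivWithinAt)
    _root_.polarCoord.symm.injOn (fun q : ℝ × ℝ => F (measurableEquivRealProd.symm q))).1
      h1.integrableOn
  refine h2.congr_fun (fun q hq => ?_) _root_.polarCoord.open_target.measurableSet
  have hq1 : 0 < q.1 := hq.1
  simp only [det_fderivPolarCoordSymm, abs_of_pos hq1]
  rfl

theorem integral_radial_weight (n : ℕ) :
    ∫ r in Ioo (0 : ℝ) 1, r * (1 - r ^ 2) ^ n = 1 / (2 * ((n : ℝ) + 1)) := by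
  rw [← integral_Ioc_eq_integral_Ioo, ← intervalIntegral.integral_of_le zero_le_one]
  have hn : (n : ℝ) + 1 ≠ 0 := by positivity
  rw [intervalIntegral.integral_eq_sub_of_hasDerivAt
    (f := fun r : ℝ => -(1 - r ^ 2) ^ (n + 1) / (2 * ((n : ℝ) + 1)))]
  · simp
    field_simp
  · intro r _
    have := ((((hasDerivAt_id r).pow 2).const_sub 1).pow (n + 1)).neg.div_const (2 * ((n : ℝ) + 1))
    convert! this using 1
    simp
    field_simp
  · exact (by fun_prop : Continuous fun r : ℝ => r * (1 - r ^ 2) ^ n).intervalIntegrable _ _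

/-- Mean value property on the circle of radius `r`, in polar coordinates. -/
theorem integral_angle {g : ℂ → ℂ} (hg : DifferentiableOn ℂ g (ball 0 1)) {r : ℝ}
    (h0 : 0 < r) (h1 : r < 1) :
    ∫ θ in Ioo (-π) π, g (Complex.polarCoord.symm (r, θ)) = 2 * π * g 0 := by
  have hcl : DiffContOnCl ℂ g (ball 0 |r|) := by
    refine (hg.mono ?_).diffContOnCl
    rw [abs_of_pos h0, closure_ball _ h0.ne']
    exact closedBall_subset_ball h1
  have hA := hcl.circleAverage
  rw [Real.circleAverage_eq_integral_add (-π),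
    intervalIntegral.integral_comp_add_right (fun θ => g (circleMap 0 r θ))] at hA
  rw [← integral_Ioc_eq_integral_Ioo, ← intervalIntegral.integral_of_le (by linarith [Real.pi_pos]),
    ← hA]
  have e1 : (0 : ℝ) + -π = -π := by ring
  have e2 : 2 * π + -π = π := by ring
  have hpi : (π : ℂ) ≠ 0 := by exact_mod_cast Real.pi_ne_zero
  rw [e1, e2, Complex.real_smul]
  push_cast
  rw [mul_inv_cancel_left₀ (mul_ne_zero two_ne_zero hpi)]
  refine intervalIntegral.integral_congr fun θ _ => ?_
  simp only [Complex.polarCoord_symm_apply, circleMap, zero_add, Complex.exp_mul_I]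
  push_cast
  rfl

/-- Weighted mean value property on the disc: a radial weight only sees the value at the centre,
and the total mass of `(1 - |ζ|²) ^ n` is `π / (n + 1)`. -/
theorem integral_disc {g : ℂ → ℂ} (n : ℕ) (hg : DifferentiableOn ℂ g (ball 0 1))
    (hi : IntegrableOn (fun ζ : ℂ => g ζ * ((1 - ‖ζ‖ ^ 2 : ℝ) : ℂ) ^ n) (ball 0 1)) :
    ∫ ζ in ball (0 : ℂ) 1, g ζ * ((1 - ‖ζ‖ ^ 2 : ℝ) : ℂ) ^ n = g 0 * (π / (n + 1)) := by
  have hF := (integrable_indicator_iff measurableSet_ball).2 hi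
  have hP := integrableOn_polarCoord_symm hF
  rw [← integral_indicator measurableSet_ball, ← Complex.integral_comp_polarCoord_symm]
  rw [polarCoord_target] at hP ⊢
  rw [Measure.volume_eq_prod, setIntegral_prod _ (by rwa [← Measure.volume_eq_prod])]
  have key : ∀ r ∈ Ioi (0 : ℝ),
      (∫ θ in Ioo (-π) π, (r, θ).1 • (ball (0 : ℂ) 1).indicator
        (fun ζ : ℂ => g ζ * ((1 - ‖ζ‖ ^ 2 : ℝ) : ℂ) ^ n) (Complex.polarCoord.symm (r, θ)))
      = (Iio (1 : ℝ)).indicator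
        (fun r => (2 * π * g 0) * ((r * (1 - r ^ 2) ^ n : ℝ) : ℂ)) r := by
    intro r hr
    have hr : 0 < r := hr
    have hnorm (θ : ℝ) : ‖Complex.polarCoord.symm (r, θ)‖ = r := by
      rw [Complex.norm_polarCoord_symm, abs_of_pos hr]
    by_cases h1 : r < 1
    · rw [indicator_of_mem (mem_Iio.2 h1), ← integral_angle hg hr h1, ← integral_mul_const]
      refine integral_congr_ae (.of_forall fun θ => ?_)
      simp only
      rw [indicator_of_mem (by rw [mem_ball_zero_iff, hnorm]; exact h1), hnorm, Complex.real_smul]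
      push_cast
      ring
    · rw [indicator_of_notMem (by simpa using h1)]
      refine integral_eq_zero_of_ae (.of_forall fun θ => ?_)
      simp only
      rw [indicator_of_notMem (by rw [mem_ball_zero_iff, hnorm]; exact h1)]
      simp
  rw [setIntegral_congr_fun measurableSet_Ioi key, setIntegral_indicator measurableSet_Iio,
    Ioi_inter_Iio, integral_const_mul, integral_complex_ofReal, integral_radial_weight]
  have : (n : ℂ) + 1 ≠ 0 := by exact_mod_cast n.succ_ne_zero
  push_cast
  field_simp

/-- The real Jacobian of multiplication by `c` on `ℂ`. -/
theorem det_mulLeft (c : ℂ) :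
    ((ContinuousLinearMap.toSpanSingleton ℂ c).restrictScalars ℝ).det = ‖c‖ ^ 2 := by
  simp [ContinuousLinearMap.det, LinearMap.det_restrictScalars, Complex.sq_norm, Algebra.norm_complex_apply]

/-- The Cayley transform `ζ ↦ (z - conj z * ζ) / (1 - ζ)`, which maps the unit disc
biholomorphically onto the upper half-plane and `0` to `z` when `0 < z.im`. -/
noncomputable def cayley (z ζ : ℂ) : ℂ := (z - conj z * ζ) / (1 - ζ)

theorem one_sub_ne_zero {ζ : ℂ} (h : ζ ∈ ball (0 : ℂ) 1) : 1 - ζ ≠ 0 := by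
  intro h0
  rw [← sub_eq_zero.1 h0] at h
  simp at h

theorem cayley_im (z : ℂ) {ζ : ℂ} (h : 1 - ζ ≠ 0) :
    (cayley z ζ).im = z.im * (1 - ‖ζ‖ ^ 2) / ‖1 - ζ‖ ^ 2 := by
  have h' : normSq (1 - ζ) ≠ 0 := by simpa using h
  rw [Complex.sq_norm, Complex.sq_norm, cayley, Complex.div_im, eq_div_iff h']
  field_simp
  simp [normSq_apply]
  ring

/-- In the disc coordinate, `z - conj w` becomes an anti-holomorphic factor, which cancels against
the anti-holomorphic part of the Jacobian and of the weight. -/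
theorem sub_conj_cayley (z : ℂ) {ζ : ℂ} (h : 1 - ζ ≠ 0) :
    z - conj (cayley z ζ) = (z - conj z) / conj (1 - ζ) := by
  have h' : conj (1 - ζ) ≠ 0 := (map_ne_zero _).2 h
  rw [cayley, map_div₀, eq_div_iff h', sub_mul, div_mul_cancel₀ _ h']
  simp
  ring

theorem hasDerivAt_cayley (z : ℂ) {ζ : ℂ} (h : 1 - ζ ≠ 0) :
    HasDerivAt (cayley z) ((z - conj z) / (1 - ζ) ^ 2) ζ := by
  have := (((hasDerivAt_id ζ).const_mul (conj z)).const_sub z).div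
    ((hasDerivAt_id ζ).const_sub 1) h
  convert! this using 1
  congr 1
  simp
  ring

theorem injOn_cayley {z : ℂ} (hz : 0 < z.im) : InjOn (cayley z) (ball 0 1) := by
  intro a ha b hb hab
  have ha' := one_sub_ne_zero ha
  have hb' := one_sub_ne_zero hb
  rw [cayley, cayley, div_eq_div_iff ha' hb'] at hab
  have h : (z - conj z) * (a - b) = 0 := by linear_combination hab
  rcases mul_eq_zero.1 h with h | h
  · rw [Complex.sub_conj] at h
    simp [hz.ne'] at h
  · exact sub_eq_zero.1 h

theorem image_cayley {z : ℂ} (hz : 0 < z.im) :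
    cayley z '' ball 0 1 = {w : ℂ | 0 < w.im} := by
  ext w
  constructor
  · rintro ⟨ζ, hζ, rfl⟩
    have h := one_sub_ne_zero hζ
    rw [mem_ball_zero_iff] at hζ
    rw [mem_ofPred_eq, cayley_im z h]
    have : 0 < 1 - ‖ζ‖ ^ 2 := by nlinarith [norm_nonneg ζ]
    have := norm_pos_iff.2 h
    positivity
  · intro hw
    have hw : 0 < w.im := hw
    have hd : w - conj z ≠ 0 := by
      intro h
      have := congrArg Complex.im h
      simp at this
      linarith
    have hzz : z - conj z ≠ 0 := by
      rw [Complex.sub_conj]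
      simp [hz.ne']
    have h1 : 1 - (w - z) / (w - conj z) = (z - conj z) / (w - conj z) := by
      field_simp
      ring
    refine ⟨(w - z) / (w - conj z), ?_, ?_⟩
    · rw [mem_ball_zero_iff, norm_div, div_lt_one (norm_pos_iff.2 hd)]
      refine lt_of_pow_lt_pow_left₀ 2 (norm_nonneg _) ?_
      rw [Complex.sq_norm, Complex.sq_norm, normSq_apply, normSq_apply]
      simp
      nlinarith [mul_pos hw hz]
    · rw [cayley, h1]
      field_simp
      ring

theorem norm_sub_conj {z : ℂ} (hz : 0 < z.im) : ‖z - conj z‖ = 2 * z.im := by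
  rw [Complex.sub_conj]
  simp [abs_of_pos hz]

/-- The reproducing formula for `p = q + 1`, solved for the integral, so that no truncated
subtraction occurs in the exponents. -/
theorem reproducing (q : ℕ) (f : ℂ → ℂ)
    (hf : DifferentiableOn ℂ f {z : ℂ | 0 < z.im})
    (hint : IntegrableOn (fun w : ℂ => ‖f w‖ ^ 2 * w.im ^ (2 * q)) {z : ℂ | 0 < z.im})
    {z : ℂ} (hz : 0 < z.im) :
    ∫ w in {z : ℂ | 0 < z.im},
      f w * ((z - conj w) ^ (2 * q + 2))⁻¹ * (w.im : ℂ) ^ (2 * q) =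
      (-1) ^ (q + 1) / 2 ^ (2 * q) * (f z * (π / (2 * q + 1))) := by
  have hder : ∀ ζ ∈ ball (0 : ℂ) 1, HasFDerivWithinAt (cayley z)
      ((ContinuousLinearMap.toSpanSingleton ℂ ((z - conj z) / (1 - ζ) ^ 2)).restrictScalars ℝ)
      (ball 0 1) ζ := fun ζ hζ =>
    ((hasDerivAt_cayley z (one_sub_ne_zero hζ)).hasFDerivAt.restrictScalars ℝ).hasFDerivWithinAt
  have hdet : ∀ ζ : ℂ, |((ContinuousLinearMap.toSpanSingleton ℂ
      ((z - conj z) / (1 - ζ) ^ 2)).restrictScalars ℝ).det| = 4 * z.im ^ 2 / ‖1 - ζ‖ ^ 4 := by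
    intro ζ
    rw [det_mulLeft, abs_of_nonneg (by positivity), norm_div, norm_sub_conj hz, norm_pow]
    ring
  set g : ℂ → ℂ := fun ζ => f (cayley z ζ) / (1 - ζ) ^ (2 * q + 2) with hgdef
  have hg : DifferentiableOn ℂ g (ball 0 1) := by
    refine DifferentiableOn.div ?_ (by fun_prop) fun ζ hζ => pow_ne_zero _ (one_sub_ne_zero hζ)
    refine hf.comp (fun ζ hζ => (hasDerivAt_cayley z
      (one_sub_ne_zero hζ)).differentiableAt.differentiableWithinAt) ?_
    rw [← image_cayley hz]
    exact mapsTo_image _ _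
  have hz0 : cayley z 0 = z := by simp [cayley]
  -- Pulling back the hypothesis gives `4 y ^ (2 * q + 2) ‖g‖² (1 - |ζ|²) ^ (2 * q)` with `y = z.im`.
  have hL2 : IntegrableOn (fun ζ : ℂ => ‖g ζ‖ ^ 2 * (1 - ‖ζ‖ ^ 2) ^ (2 * q)) (ball 0 1) := by
    rw [← image_cayley hz, integrableOn_image_iff_integrableOn_abs_det_fderiv_smul volume
      measurableSet_ball hder (injOn_cayley hz)] at hint
    refine IntegrableOn.congr_fun (hint.const_mul (4 * z.im ^ (2 * q + 2))⁻¹)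
      (fun ζ hζ => ?_) measurableSet_ball
    have h1 := one_sub_ne_zero hζ
    have h2 := norm_pos_iff.2 h1
    simp only [hdet, cayley_im z h1, hgdef, norm_div, norm_pow, smul_eq_mul,
      div_pow, mul_pow]
    field_simp
    ring
  -- The weight is at most `1` and the disc has finite area, so `‖g‖ W ≤ ‖g‖² W + 1` suffices.
  have hL1 : IntegrableOn (fun ζ : ℂ => g ζ * ((1 - ‖ζ‖ ^ 2 : ℝ) : ℂ) ^ (2 * q)) (ball 0 1) := by
    have hone : IntegrableOn (fun _ : ℂ => (1 : ℝ)) (ball (0 : ℂ) 1) :=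
      integrableOn_const (measure_ball_lt_top.ne)
    refine Integrable.mono' (hL2.add hone) ?_ ?_
    · refine ContinuousOn.aestronglyMeasurable ?_ measurableSet_ball
      exact hg.continuousOn.mul (by fun_prop)
    · refine (ae_restrict_iff' measurableSet_ball).2 (.of_forall fun ζ hζ => ?_)
      rw [mem_ball_zero_iff] at hζ
      have ha : 0 ≤ 1 - ‖ζ‖ ^ 2 := by nlinarith [norm_nonneg ζ]
      have hW0 : 0 ≤ (1 - ‖ζ‖ ^ 2) ^ (2 * q) := by positivity
      have hW1 : (1 - ‖ζ‖ ^ 2) ^ (2 * q) ≤ 1 := pow_le_one₀ ha (by nlinarith [norm_nonneg ζ])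
      rw [norm_mul, norm_pow, Complex.norm_real, Real.norm_of_nonneg ha]
      simp only [Pi.add_apply]
      nlinarith [mul_nonneg hW0 (sq_nonneg (‖g ζ‖ - 1)), mul_nonneg hW0 (sq_nonneg ‖g ζ‖)]
  have hdisc := integral_disc (2 * q) hg hL1
  have hg0 : g 0 = f z := by simp [hgdef, hz0]
  rw [hg0] at hdisc
  push_cast at hdisc
  rw [← hdisc, ← image_cayley hz, integral_image_eq_integral_abs_det_fderiv_smul volume
    measurableSet_ball hder (injOn_cayley hz), ← integral_const_mul]
  refine setIntegral_congr_fun measurableSet_ball fun ζ hζ => ?_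
  have h1 := one_sub_ne_zero hζ
  have h1' : conj (1 - ζ) ≠ 0 := (map_ne_zero _).2 h1
  have hzi : (z.im : ℂ) ≠ 0 := by exact_mod_cast hz.ne'
  have hsq : ((‖1 - ζ‖ : ℝ) : ℂ) ^ 2 = (1 - ζ) * conj (1 - ζ) := by
    rw [Complex.mul_conj, Complex.normSq_eq_norm_sq]
    push_cast
    rfl
  have h4 : ((‖1 - ζ‖ : ℝ) : ℂ) ^ 4 = ((1 - ζ) * conj (1 - ζ)) ^ 2 := by
    rw [← hsq]; ring
  have hI : (I : ℂ) ^ (2 * q + 2) = (-1) ^ (q + 1) := by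
    rw [show 2 * q + 2 = 2 * (q + 1) by ring, pow_mul, Complex.I_sq]
  have hm : ((-1 : ℂ)) ^ (q + 1) * (-1) ^ (q + 1) = 1 := by
    rw [← mul_pow]; simp
  have hm0 : ((-1 : ℂ)) ^ (q + 1) ≠ 0 := by simp
  simp only [hdet, cayley_im z h1, sub_conj_cayley z h1, Complex.real_smul, hgdef]
  push_cast
  rw [h4, hsq, Complex.sub_conj]
  push_cast
  simp only [div_pow, mul_pow, hI]
  generalize conj (1 - ζ) = c at *
  generalize (1 - ζ) = a at *
  generalize (1 - ((‖ζ‖ : ℝ) : ℂ) ^ 2) = W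
  generalize f (cayley z ζ) = F
  generalize ((-1 : ℂ)) ^ (q + 1) = s at *
  conv_rhs => rw [eq_inv_of_mul_eq_one_left hm]
  field_simp
  ring

/-- Reproducing formula for the weighted Bergman space of weight `2p` on the upper
half-plane: a holomorphic weighted-`L²` function `f` satisfies
`f(z) = c_p ∫_ℍ f(w) (z - conj w)^{-2p} (Im w)^{2p-2} dA(w)` with
`c_p = (-1)^p 2^{2p-2} (2 * p - 1) / π`. -/
theorem stmt_10 (p : ℕ) (hp : 1 ≤ p) (f : ℂ → ℂ)
    (hf : DifferentiableOn ℂ f {z : ℂ | 0 < z.im})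
    (hint : IntegrableOn (fun w : ℂ => ‖f w‖ ^ 2 * w.im ^ (2 * p - 2)) {z : ℂ | 0 < z.im}) :
    ∀ z ∈ {z : ℂ | 0 < z.im},
      f z = ((-1 : ℂ) ^ p * 2 ^ (2 * p - 2) * (2 * (p : ℂ) - 1) / (π : ℂ)) *
        ∫ w in {z : ℂ | 0 < z.im},
          f w * ((z - (starRingEnd ℂ) w) ^ (2 * p))⁻¹ * ((w.im : ℂ)) ^ (2 * p - 2) := by
  intro z hz
  obtain ⟨q, rfl⟩ : ∃ q, p = q + 1 := ⟨p - 1, by omega⟩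
  have e : 2 * (q + 1) - 2 = 2 * q := by omega
  have e' : 2 * (q + 1) = 2 * q + 2 := by ring
  rw [e] at hint ⊢
  rw [e', reproducing q f hf hint hz]
  have hm : ((-1 : ℂ)) ^ (q + 1) * (-1) ^ (q + 1) = 1 := by
    rw [← mul_pow]; simp
  have hpi : (π : ℂ) ≠ 0 := by exact_mod_cast Real.pi_ne_zero
  have hq : (2 * q + 1 : ℂ) ≠ 0 := by exact_mod_cast (2 * q).succ_ne_zero
  push_cast
  rw [show (2 * ((q : ℂ) + 1) - 1) = 2 * q + 1 by ring]
  field_simp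
  linear_combination (-f z) * hm
end

section
/- Let p ≥ 1 be an integer and let z, z' ∈ ℍ = {w ∈ ℂ : Im w > 0}. Then c_p · ∫_{ℍ} (z − conj(w))^{−2p} · (w − conj(z'))^{−2p} · (Im w)^{2p−2} dA(w) = (z − conj(z'))^{−2p}, where c_p = (−1)^p · 2^{2p−2} · (2p−1) / π. -/
open MeasureTheory
open scoped Real

/-!
Write `n = 2p`, `w = x + iy` and `s = z - conj z'`. Since `n` is even, the integrand is
`(x - a)^{-n} (x - b)^{-n} y^{n-2}` with `a = z + iy` above and `b = conj z' - iy` below the real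
axis, so that `a - b = s + 2iy`. It is dominated by a multiple of `(1 + x²)⁻¹ (1 + y²)⁻¹`
(`integrable_kernel`), and Fubini allows integrating over `x` first.

* The `x`-integral (`integral_line`) is `2πi` times the residue at `a`, namely
  `2πi (-1)^{n-1} C(2n-2, n-1) (s + 2iy)^{-(2n-1)}`. It is obtained without contour integration: parts
  and partial fractions reduce it to `∫ (x - a)⁻¹ (x - b)⁻¹ dx = 2πi / (a - b)`, which is computed
  with a logarithmic antiderivative.
* The `y`-integral (`integral_ray`) is a Beta integral,
  `∫₀^∞ y^{n-2} (s + 2iy)^{-(2n-1)} dy = (n-2)! (n-1)! / ((2n-2)! (2i)^{n-1} s^n)`,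
  obtained by induction with integration by parts.

The factorials cancel up to `1 / (n - 1)`, and the product is `1 / c_p` times `s^{-n}`.
-/

open Filter Topology

/-! ### Integrals over horizontal lines -/

lemma inv_pow_norm_le {u : ℂ} {c : ℝ} (hc : 0 < c) (hu : c ≤ ‖u‖) (m j : ℕ) :
    ‖(u ^ (m + j))⁻¹‖ ≤ (c ^ m)⁻¹ * (‖u‖ ^ j)⁻¹ := by
  have hu0 : 0 < ‖u‖ := hc.trans_le hu
  rw [norm_inv, norm_pow, pow_add, mul_inv]
  gcongr

/-- Since `x² ≤ 2(x - α)² + 2α²`, the constant `2 + (1 + 2α²)/β²` works. It makes every kernel below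
dominated by the integrable function `(1 + x²)⁻¹`. -/
lemma one_add_sq_le (α β : ℝ) (hβ : β ≠ 0) :
    ∃ C : ℝ, 0 < C ∧ ∀ x t : ℝ, β ^ 2 ≤ t → 1 + x ^ 2 ≤ C * ((x - α) ^ 2 + t) := by
  have hb : 0 < β ^ 2 := by positivity
  refine ⟨2 + (1 + 2 * α ^ 2) / β ^ 2, by positivity, fun x t ht => ?_⟩
  have h1 : (1 + 2 * α ^ 2) / β ^ 2 * β ^ 2 = 1 + 2 * α ^ 2 := by field_simp
  have h2 : 0 ≤ (1 + 2 * α ^ 2) / β ^ 2 := by positivity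
  set K := (1 + 2 * α ^ 2) / β ^ 2
  nlinarith [mul_le_mul_of_nonneg_left ht h2, mul_nonneg h2 (sq_nonneg (x - α)),
    sq_nonneg (x - 2 * α)]

lemma inv_sq_norm_le {a : ℂ} (ha : a.im ≠ 0) :
    ∃ C : ℝ, 0 < C ∧ ∀ x : ℝ, (‖(x : ℂ) - a‖ ^ 2)⁻¹ ≤ C * (1 + x ^ 2)⁻¹ := by
  obtain ⟨C, hC, h⟩ := one_add_sq_le a.re a.im ha
  refine ⟨C, hC, fun x => ?_⟩
  have h1 := h x _ le_rfl
  have h2 : ‖(x : ℂ) - a‖ ^ 2 = (x - a.re) ^ 2 + a.im ^ 2 := by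
    rw [Complex.sq_norm, Complex.normSq_apply]; simp; ring
  have h3 : 0 < (x - a.re) ^ 2 + a.im ^ 2 := by positivity
  rw [h2, inv_le_iff_one_le_mul₀ h3, mul_assoc, ← div_eq_inv_mul, ← mul_div_assoc,
    one_le_div (by positivity)]
  exact h1

lemma ofReal_sub_ne_zero {a : ℂ} (ha : a.im ≠ 0) (x : ℝ) : (x : ℂ) - a ≠ 0 := by
  intro h
  have := congrArg Complex.im h
  simp at this
  exact ha this

lemma integrable_inv_pow_mul_inv_pow {a b : ℂ} (ha : a.im ≠ 0) (hb : b.im ≠ 0) (m k : ℕ) :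
    Integrable fun x : ℝ => (((x : ℂ) - a) ^ (m + 1))⁻¹ * (((x : ℂ) - b) ^ (k + 1))⁻¹ := by
  obtain ⟨A, hA, hA'⟩ := inv_sq_norm_le ha
  obtain ⟨B, hB, hB'⟩ := inv_sq_norm_le hb
  have hle : ∀ {a : ℂ} (x : ℝ), |a.im| ≤ ‖(x : ℂ) - a‖ := fun {a} x => by
    simpa using Complex.abs_im_le_norm ((x : ℂ) - a)
  refine (integrable_inv_one_add_sq.const_mul
    ((|a.im| ^ m)⁻¹ * (|b.im| ^ k)⁻¹ * (A + B))).mono' ?_ (Eventually.of_forall fun x => ?_)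
  · refine Continuous.aestronglyMeasurable ?_
    have h1 := ofReal_sub_ne_zero ha
    have h2 := ofReal_sub_ne_zero hb
    exact ((by fun_prop : Continuous fun x : ℝ => ((x : ℂ) - a) ^ (m + 1)).inv₀
      fun x => pow_ne_zero _ (h1 x)).mul
      ((by fun_prop : Continuous fun x : ℝ => ((x : ℂ) - b) ^ (k + 1)).inv₀
      fun x => pow_ne_zero _ (h2 x))
  · have h1 := inv_pow_norm_le (abs_pos.2 ha) (hle (a := a) x) m 1
    have h2 := inv_pow_norm_le (abs_pos.2 hb) (hle (a := b) x) k 1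
    rw [norm_mul]
    refine (mul_le_mul h1 h2 (norm_nonneg _) (by positivity)).trans ?_
    have h3 := hA' x
    have h4 := hB' x
    rw [← inv_pow] at h3 h4
    have h5 : ‖(x : ℂ) - a‖⁻¹ * ‖(x : ℂ) - b‖⁻¹ ≤ (A + B) * (1 + x ^ 2)⁻¹ := by
      nlinarith [two_mul_le_add_sq ‖(x : ℂ) - a‖⁻¹ ‖(x : ℂ) - b‖⁻¹,
        sq_nonneg ‖(x : ℂ) - a‖⁻¹, sq_nonneg ‖(x : ℂ) - b‖⁻¹]
    calc _ = (|a.im| ^ m)⁻¹ * (|b.im| ^ k)⁻¹ * (‖(x : ℂ) - a‖⁻¹ * ‖(x : ℂ) - b‖⁻¹) := by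
          simp only [pow_one]; ring
      _ ≤ (|a.im| ^ m)⁻¹ * (|b.im| ^ k)⁻¹ * ((A + B) * (1 + x ^ 2)⁻¹) := by gcongr
      _ = _ := by ring

lemma hasDerivAt_ofReal (x : ℝ) : HasDerivAt (fun t : ℝ => (t : ℂ)) 1 x := by
  simpa using (hasDerivAt_id x).ofReal_comp

lemma hasDerivAt_inv_pow {f : ℝ → ℂ} {f' : ℂ} {x : ℝ} (hf : HasDerivAt f f' x) (h0 : f x ≠ 0)
    (k : ℕ) :
    HasDerivAt (fun t => (f t ^ (k + 1))⁻¹) (-(k + 1) * f' * (f x ^ (k + 2))⁻¹) x := by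
  refine ((hf.fun_pow (k + 1)).fun_inv (pow_ne_zero _ h0)).congr_deriv ?_
  simp only [Nat.add_sub_cancel]
  push_cast
  field_simp
  ring

lemma hasDerivAt_inv_pow_sub {a : ℂ} (ha : a.im ≠ 0) (k : ℕ) (x : ℝ) :
    HasDerivAt (fun t : ℝ => (((t : ℂ) - a) ^ (k + 1))⁻¹)
      (-(k + 1) * (((x : ℂ) - a) ^ (k + 2))⁻¹) x := by
  simpa using hasDerivAt_inv_pow ((hasDerivAt_ofReal x).sub_const a)
    (ofReal_sub_ne_zero ha x) k

lemma tendsto_inv_pow_sub (a : ℂ) (k : ℕ) {l : Filter ℝ}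
    (hl : Tendsto (fun x : ℝ => (x : ℂ)) l (Bornology.cobounded ℂ)) :
    Tendsto (fun x : ℝ => (((x : ℂ) - a) ^ (k + 1))⁻¹) l (𝓝 0) := by
  have h1 : Tendsto (fun x : ℝ => (x : ℂ) - a) l (Bornology.cobounded ℂ) := by
    rw [← tendsto_norm_atTop_iff_cobounded] at hl ⊢
    refine tendsto_atTop_mono (fun x => norm_sub_norm_le _ _) (tendsto_atTop_add_const_right _ _ hl)
  have h2 := (tendsto_inv₀_cobounded.comp h1).pow (k + 1)
  simpa [Function.comp_def] using h2

lemma ofReal_atTop : Tendsto (fun x : ℝ => (x : ℂ)) atTop (Bornology.cobounded ℂ) := by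
  rw [← tendsto_norm_atTop_iff_cobounded]
  simpa using tendsto_abs_atTop_atTop

lemma ofReal_atBot : Tendsto (fun x : ℝ => (x : ℂ)) atBot (Bornology.cobounded ℂ) := by
  rw [← tendsto_norm_atTop_iff_cobounded]
  simpa using tendsto_abs_atBot_atTop

lemma integral_inv_pow_eq_zero {b : ℂ} (hb : b.im ≠ 0) (k : ℕ) :
    ∫ x : ℝ, (((x : ℂ) - b) ^ (k + 2))⁻¹ = 0 := by
  have hint : Integrable fun x : ℝ => (((x : ℂ) - b) ^ (k + 2))⁻¹ := by
    refine (integrable_inv_pow_mul_inv_pow hb hb k 0).congr (Eventually.of_forall fun x => ?_)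
    simp only [← mul_inv, ← pow_add]
  have h := integral_of_hasDerivAt_of_tendsto (hasDerivAt_inv_pow_sub hb k)
    (hint.const_mul _) (tendsto_inv_pow_sub b k ofReal_atBot) (tendsto_inv_pow_sub b k ofReal_atTop)
  rw [integral_const_mul, sub_zero, mul_eq_zero] at h
  refine h.resolve_left (neg_ne_zero.2 ?_)
  exact_mod_cast k.succ_ne_zero

/-- Integration by parts on the line, with vanishing boundary terms: moves one power from `x - a`
to `x - b`. -/
lemma integral_by_parts_line {a b : ℂ} (ha : a.im ≠ 0) (hb : b.im ≠ 0) (m k : ℕ) :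
    ((m : ℂ) + 1) * ∫ x : ℝ, (((x : ℂ) - a) ^ (m + 2))⁻¹ * (((x : ℂ) - b) ^ (k + 1))⁻¹ =
    -((k : ℂ) + 1) * ∫ x : ℝ, (((x : ℂ) - a) ^ (m + 1))⁻¹ * (((x : ℂ) - b) ^ (k + 2))⁻¹ := by
  have h1 := integrable_inv_pow_mul_inv_pow ha hb (m + 1) k
  have h2 := integrable_inv_pow_mul_inv_pow ha hb m (k + 1)
  have h := integral_of_hasDerivAt_of_tendsto
    (fun x => (hasDerivAt_inv_pow_sub ha m x).mul (hasDerivAt_inv_pow_sub hb k x))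
    (((h1.const_mul (-(m + 1 : ℂ))).add (h2.const_mul (-(k + 1 : ℂ)))).congr
      (Eventually.of_forall fun x => by simp only [Pi.add_apply]; ring))
    ((tendsto_inv_pow_sub a m ofReal_atBot).mul (tendsto_inv_pow_sub b k ofReal_atBot))
    ((tendsto_inv_pow_sub a m ofReal_atTop).mul (tendsto_inv_pow_sub b k ofReal_atTop))
  have h3 : ∫ x : ℝ, (-(m + 1 : ℂ) * ((((x : ℂ) - a) ^ (m + 2))⁻¹ * (((x : ℂ) - b) ^ (k + 1))⁻¹)
      + -(k + 1 : ℂ) * ((((x : ℂ) - a) ^ (m + 1))⁻¹ * (((x : ℂ) - b) ^ (k + 2))⁻¹)) = 0 := by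
    rw [sub_self] at h
    rw [← h]
    congr 1 with x
    ring
  rw [integral_add (h1.const_mul _) (h2.const_mul _), integral_const_mul, integral_const_mul] at h3
  linear_combination -h3

/-- The real logarithms of the moduli cancel: `log (c (x - a)) = log x + log (c (1 - a / x))` for
`x > 0`, and similarly for `-c` and `b`. -/
lemma tendsto_log_sub_log (a b : ℂ) {c : ℂ} (hc : c ∈ Complex.slitPlane)
    (hc' : -c ∈ Complex.slitPlane) :
    Tendsto (fun x : ℝ => Complex.log (c * (x - a)) - Complex.log (-c * (x - b))) atTop
      (𝓝 (Complex.log c - Complex.log (-c))) := by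
  have key : ∀ (a : ℂ) {c : ℂ}, c ∈ Complex.slitPlane →
      Tendsto (fun x : ℝ => Complex.log (c * (1 - a * (x : ℂ)⁻¹))) atTop (𝓝 (Complex.log c)) ∧
      ∀ᶠ x : ℝ in atTop, c * (1 - a * (x : ℂ)⁻¹) ≠ 0 := by
    intro a c hc
    have h : Tendsto (fun x : ℝ => c * (1 - a * (x : ℂ)⁻¹)) atTop (𝓝 c) := by
      have := ((tendsto_inv₀_cobounded.comp ofReal_atTop).const_mul a).const_sub 1 |>.const_mul c
      simpa [Function.comp_def] using this
    exact ⟨h.clog hc, h.eventually_ne (Complex.slitPlane_ne_zero hc)⟩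
  obtain ⟨h1, h1'⟩ := key a hc
  obtain ⟨h2, h2'⟩ := key b hc'
  refine (h1.sub h2).congr' ?_
  filter_upwards [h1', h2', eventually_gt_atTop 0] with x e1 e2 hx
  have hx0 : (x : ℂ) ≠ 0 := by exact_mod_cast hx.ne'
  have r1 : c * (x - a) = x * (c * (1 - a * (x : ℂ)⁻¹)) := by field_simp
  have r2 : -c * (x - b) = x * (-c * (1 - b * (x : ℂ)⁻¹)) := by field_simp
  rw [r1, r2, Complex.log_ofReal_mul hx e1, Complex.log_ofReal_mul hx e2]
  ring

/-- The antiderivative is `log (i(x - a)) - log (-i(x - b))` divided by `a - b`; both arguments have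
positive real part, so the principal branch is smooth along the whole line. -/
lemma integral_line_base {a b : ℂ} (ha : 0 < a.im) (hb : b.im < 0) :
    ∫ x : ℝ, ((x : ℂ) - a)⁻¹ * ((x : ℂ) - b)⁻¹ = 2 * π * Complex.I / (a - b) := by
  have hab : a - b ≠ 0 := fun h => by
    have := congrArg Complex.im h
    simp at this
    linarith
  have hint := (integrable_inv_pow_mul_inv_pow ha.ne' hb.ne 0 0).const_mul (a - b)
  -- At `+∞` the antiderivative tends to `log i - log (-i) = πi`, at `-∞` to `-πi`.
  have hI : Complex.I ∈ Complex.slitPlane := by simp [Complex.slitPlane]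
  have hI' : -Complex.I ∈ Complex.slitPlane := by simp [Complex.slitPlane]
  have hd : ∀ x : ℝ, HasDerivAt (fun x : ℝ => Complex.log (Complex.I * (x - a)) -
      Complex.log (-Complex.I * (x - b)))
      ((a - b) * ((((x : ℂ) - a) ^ (0 + 1))⁻¹ * (((x : ℂ) - b) ^ (0 + 1))⁻¹)) x := by
    intro x
    have e1 := ofReal_sub_ne_zero ha.ne' x
    have e2 := ofReal_sub_ne_zero hb.ne x
    have h1 := (((hasDerivAt_ofReal x).sub_const a).const_mul
      Complex.I).clog_real (by left; simpa using ha)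
    have h2 := (((hasDerivAt_ofReal x).sub_const b).const_mul
      (-Complex.I)).clog_real (by left; simpa using hb)
    refine (h1.sub h2).congr_deriv ?_
    simp only [mul_one, zero_add, pow_one]
    have := Complex.I_ne_zero
    field_simp
    ring
  have ht := tendsto_log_sub_log a b hI hI'
  have hb' : Tendsto (fun x : ℝ => Complex.log (Complex.I * (x - a)) -
      Complex.log (-Complex.I * (x - b))) atBot
      (𝓝 (Complex.log (-Complex.I) - Complex.log Complex.I)) := by
    have := (tendsto_log_sub_log (-a) (-b) hI' (by simpa using hI)).comp tendsto_neg_atBot_atTop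
    rw [neg_neg] at this
    refine this.congr fun x => ?_
    simp only [Function.comp_apply, Complex.ofReal_neg]
    congr 2 <;> ring
  have h := integral_of_hasDerivAt_of_tendsto hd hint hb' ht
  rw [integral_const_mul, Complex.log_I, Complex.log_neg_I] at h
  simp only [zero_add, pow_one] at h
  rw [eq_div_iff hab]
  linear_combination h

/-- The value the residue theorem gives at the pole `a`. In the exponent `m = 0`, partial fractions
`(x - a)⁻¹ (x - b)⁻¹ = (a - b)⁻¹ ((x - a)⁻¹ - (x - b)⁻¹)` reduce `k + 1` to `k`; then
`integral_by_parts_line` raises `m`. -/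
lemma integral_line {a b : ℂ} (ha : 0 < a.im) (hb : b.im < 0) (m k : ℕ) :
    ∫ x : ℝ, (((x : ℂ) - a) ^ (m + 1))⁻¹ * (((x : ℂ) - b) ^ (k + 1))⁻¹ =
      2 * π * Complex.I * (-1) ^ m * ((m + k).factorial / (m.factorial * k.factorial)) /
        (a - b) ^ (m + k + 1) := by
  have hab : a - b ≠ 0 := fun h => by
    have := congrArg Complex.im h
    simp at this
    linarith
  induction m generalizing k with
  | zero =>
    induction k with
    | zero => simpa using integral_line_base ha hb
    | succ k ih =>
      have h1 := integrable_inv_pow_mul_inv_pow ha.ne' hb.ne 0 k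
      have h2 := integrable_inv_pow_mul_inv_pow hb.ne hb.ne 0 k
      have h3 : ∫ x : ℝ, (((x : ℂ) - a) ^ (0 + 1))⁻¹ * (((x : ℂ) - b) ^ (k + 1 + 1))⁻¹ =
          ∫ x : ℝ, (a - b)⁻¹ * ((((x : ℂ) - a) ^ (0 + 1))⁻¹ * (((x : ℂ) - b) ^ (k + 1))⁻¹ -
            (((x : ℂ) - b) ^ (0 + 1))⁻¹ * (((x : ℂ) - b) ^ (k + 1))⁻¹) := by
        congr 1 with x
        have e1 := ofReal_sub_ne_zero ha.ne' x
        have e2 := ofReal_sub_ne_zero hb.ne x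
        field_simp
        ring
      have h4 : ∫ x : ℝ, (((x : ℂ) - b) ^ (0 + 1))⁻¹ * (((x : ℂ) - b) ^ (k + 1))⁻¹ = 0 := by
        rw [← integral_inv_pow_eq_zero hb.ne k]
        congr 1 with x
        rw [← mul_inv, ← pow_add]
        congr 2
        ring
      rw [h3, integral_const_mul, integral_sub h1 h2, ih, h4]
      have f1 : ((k.factorial : ℕ) : ℂ) ≠ 0 := by exact_mod_cast k.factorial_ne_zero
      have f2 : (((k + 1).factorial : ℕ) : ℂ) ≠ 0 := by exact_mod_cast (k + 1).factorial_ne_zero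
      simp only [zero_add, Nat.factorial_zero, Nat.cast_one, one_mul, div_self f1, div_self f2]
      field_simp
      ring
  | succ m ih =>
    have h := integral_by_parts_line ha.ne' hb.ne m k
    rw [show (k + 2) = (k + 1) + 1 from rfl, ih (k + 1)] at h
    have hm : (m : ℂ) + 1 ≠ 0 := by exact_mod_cast m.succ_ne_zero
    have hk : (k : ℂ) + 1 ≠ 0 := by exact_mod_cast k.succ_ne_zero
    have f1 : ((k.factorial : ℕ) : ℂ) ≠ 0 := by exact_mod_cast k.factorial_ne_zero
    have f2 : ((m.factorial : ℕ) : ℂ) ≠ 0 := by exact_mod_cast m.factorial_ne_zero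
    rw [show m + 1 + 1 = m + 2 from rfl]
    refine mul_left_cancel₀ hm (h.trans ?_)
    rw [show m + 1 + k = m + (k + 1) by ring, Nat.factorial_succ m, Nat.factorial_succ k]
    push_cast
    field_simp
    ring

/-! ### The Beta integral in the imaginary part -/

lemma le_norm_ray (s : ℂ) (y : ℝ) :
    s.im + 2 * y ≤ ‖s + 2 * Complex.I * y‖ := by
  have := (le_abs_self _).trans (Complex.abs_im_le_norm (s + 2 * Complex.I * y))
  simpa using this

lemma ray_ne_zero {s : ℂ} (hs : 0 < s.im) {y : ℝ} (hy : 0 ≤ y) : s + 2 * Complex.I * y ≠ 0 :=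
  norm_pos_iff.1 (by linarith [le_norm_ray s y])

lemma norm_ray_le {s : ℂ} (hs : 0 < s.im) {y : ℝ} (hy : 0 ≤ y) (m j : ℕ) :
    ‖(y : ℂ) ^ m * ((s + 2 * Complex.I * y) ^ (m + j))⁻¹‖ ≤ (‖s + 2 * Complex.I * y‖ ^ j)⁻¹ := by
  have h := le_norm_ray s y
  have h0 : 0 < ‖s + 2 * Complex.I * y‖ := by linarith
  rw [norm_mul, norm_inv, norm_pow, norm_pow, pow_add, mul_inv, Complex.norm_real, Real.norm_eq_abs,
    abs_of_nonneg hy, ← mul_assoc]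
  refine mul_le_of_le_one_left (by positivity) ?_
  rw [← div_eq_mul_inv, ← div_pow]
  exact pow_le_one₀ (by positivity) ((div_le_one h0).2 (by linarith))

lemma integrableOn_ray {s : ℂ} (hs : 0 < s.im) (m j : ℕ) :
    IntegrableOn (fun y : ℝ => (y : ℂ) ^ m * ((s + 2 * Complex.I * y) ^ (m + j + 2))⁻¹)
      (Set.Ioi 0) := by
  obtain ⟨C, hC, h⟩ := one_add_sq_le 0 s.im hs.ne'
  refine ((integrable_inv_one_add_sq.const_mul ((s.im ^ j)⁻¹ * C)).integrableOn).mono' ?_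
    ((ae_restrict_mem measurableSet_Ioi).mono fun y hy => ?_)
  · refine ContinuousOn.aestronglyMeasurable ?_ measurableSet_Ioi
    refine ContinuousOn.mul (by fun_prop) (ContinuousOn.inv₀ (by fun_prop) fun y hy => ?_)
    exact pow_ne_zero _ (ray_ne_zero hs (le_of_lt hy))
  · have hy0 : 0 ≤ y := le_of_lt hy
    have h1 := le_norm_ray s y
    have h2 : (s.im : ℝ) ≤ ‖s + 2 * Complex.I * y‖ := by linarith
    have h0 : 0 < ‖s + 2 * Complex.I * y‖ := by linarith
    rw [add_assoc]
    refine (norm_ray_le hs hy0 m (j + 2)).trans ?_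
    rw [pow_add, mul_inv, mul_assoc (_⁻¹) C]
    have h3 : (‖s + 2 * Complex.I * y‖ ^ 2)⁻¹ ≤ C * (1 + y ^ 2)⁻¹ := by
      rw [inv_le_iff_one_le_mul₀ (by positivity), mul_assoc, ← div_eq_inv_mul, ← mul_div_assoc,
        one_le_div (by positivity)]
      refine (h y _ le_rfl).trans ?_
      gcongr
      nlinarith
    exact mul_le_mul (by gcongr) h3 (by positivity) (by positivity)

lemma hasDerivAt_ray (s : ℂ) (y : ℝ) :
    HasDerivAt (fun t : ℝ => s + 2 * Complex.I * t) (2 * Complex.I) y := by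
  simpa using ((hasDerivAt_ofReal y).const_mul (2 * Complex.I)).const_add s

lemma tendsto_ray {s : ℂ} (hs : 0 < s.im) (m j : ℕ) :
    Tendsto (fun y : ℝ => (y : ℂ) ^ m * ((s + 2 * Complex.I * y) ^ (m + j + 1))⁻¹) atTop (𝓝 0) := by
  have h : Tendsto (fun y : ℝ => ‖s + 2 * Complex.I * y‖) atTop atTop := by
    refine tendsto_atTop_mono' _ ?_ tendsto_id
    filter_upwards [eventually_ge_atTop 0] with y hy
    have := le_norm_ray s y
    simp only [id]
    linarith
  have h2 := ((tendsto_pow_atTop (Nat.succ_ne_zero j)).comp h).inv_tendsto_atTop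
  refine squeeze_zero_norm' ?_ h2
  filter_upwards [eventually_ge_atTop 0] with y hy
  exact norm_ray_le hs hy m (j + 1)

/-- The Beta integral along the ray `s + 2iy`. Raising `m` by one is integration by parts, with
boundary terms vanishing at `0` and at `∞`. -/
lemma integral_ray {s : ℂ} (hs : 0 < s.im) (m j : ℕ) :
    ∫ y : ℝ in Set.Ioi 0, (y : ℂ) ^ m * ((s + 2 * Complex.I * y) ^ (m + j + 2))⁻¹ =
      m.factorial * j.factorial /
        ((m + j + 1).factorial * (2 * Complex.I) ^ (m + 1) * s ^ (j + 1)) := by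
  have hs0 : s ≠ 0 := fun h => by simp [h] at hs
  have hI := Complex.I_ne_zero
  have hd : ∀ k : ℕ, ∀ y : ℝ, 0 ≤ y → HasDerivAt
      (fun t : ℝ => ((s + 2 * Complex.I * t) ^ (k + 1))⁻¹)
      (-(k + 1) * (2 * Complex.I) * ((s + 2 * Complex.I * y) ^ (k + 2))⁻¹) y := fun k y hy =>
    hasDerivAt_inv_pow (hasDerivAt_ray s y) (ray_ne_zero hs hy) k
  induction m with
  | zero =>
    have hint := (integrableOn_ray hs 0 j).const_mul (-(j + 1) * (2 * Complex.I))
    have ht := tendsto_ray hs 0 j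
    simp only [pow_zero, one_mul, zero_add] at hint ht ⊢
    have h := integral_Ioi_of_hasDerivAt_of_tendsto (hd j 0 le_rfl).continuousAt.continuousWithinAt
      (fun y hy => hd j y (le_of_lt hy)) hint ht
    rw [integral_const_mul] at h
    have hj : (j : ℂ) + 1 ≠ 0 := by exact_mod_cast j.succ_ne_zero
    have f1 : ((j.factorial : ℕ) : ℂ) ≠ 0 := by exact_mod_cast j.factorial_ne_zero
    refine mul_left_cancel₀ (neg_ne_zero.2 (mul_ne_zero hj (mul_ne_zero two_ne_zero hI))) ?_
    rw [← neg_mul, h, Nat.factorial_succ]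
    push_cast
    simp only [mul_zero, add_zero, zero_sub, Nat.factorial_zero,
      Nat.cast_one, one_mul, pow_one]
    field_simp
  | succ m ih =>
    have h1 := integrableOn_ray hs m j
    have h2 := integrableOn_ray hs (m + 1) j
    have hD : ∀ y : ℝ, 0 ≤ y → HasDerivAt
        (fun t : ℝ => (t : ℂ) ^ (m + 1) * ((s + 2 * Complex.I * t) ^ (m + 1 + j + 1))⁻¹)
        ((m + 1) * ((y : ℂ) ^ m * ((s + 2 * Complex.I * y) ^ (m + j + 2))⁻¹) +
          (-(m + j + 2) * (2 * Complex.I)) *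
          ((y : ℂ) ^ (m + 1) * ((s + 2 * Complex.I * y) ^ (m + 1 + j + 2))⁻¹)) y := by
      intro y hy
      refine (((hasDerivAt_ofReal y).fun_pow (m + 1)).mul
        (hd (m + 1 + j) y hy)).congr_deriv ?_
      simp only [Nat.add_sub_cancel]
      rw [show m + 1 + j + 1 = m + j + 2 by ring]
      push_cast
      ring
    have h := integral_Ioi_of_hasDerivAt_of_tendsto (hD 0 le_rfl).continuousAt.continuousWithinAt
      (fun y hy => hD y (le_of_lt hy)) ((h1.const_mul _).add (h2.const_mul _))
      (tendsto_ray hs (m + 1) j)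
    rw [integral_add (h1.const_mul _) (h2.const_mul _), integral_const_mul, integral_const_mul,
      ih] at h
    have hj : (m : ℂ) + j + 2 ≠ 0 := by exact_mod_cast (m + j + 1).succ_ne_zero
    have f1 : (((m + j + 1).factorial : ℕ) : ℂ) ≠ 0 := by
      exact_mod_cast (m + j + 1).factorial_ne_zero
    refine mul_left_cancel₀ (neg_ne_zero.2 (mul_ne_zero hj (mul_ne_zero two_ne_zero hI))) ?_
    rw [show m + 1 + j + 1 = (m + j + 1) + 1 by ring, Nat.factorial_succ (m + j + 1),
      Nat.factorial_succ m]
    push_cast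
    simp only [Complex.ofReal_zero, zero_pow m.succ_ne_zero, zero_mul, sub_zero] at h
    rw [← neg_mul]
    refine (eq_neg_of_add_eq_zero_right h).trans ?_
    rw [show (m : ℂ) + j + 1 + 1 = m + j + 2 by ring, pow_succ (2 * Complex.I) (m + 1)]
    field_simp

/-! ### Fubini and the final computation -/

/-- With `u`, `v` the two kernel factors, the integrand has modulus
`(y / (|u| |v|))^{2q} |u|⁻² |v|⁻²`; here `y ≤ |v|` and `Im z ≤ |u|` bound the first factor by a
constant, while `|u|²` controls `1 + x²` and `|v|²` controls `1 + y²`. -/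
lemma integrable_kernel (q : ℕ) (z z' : ℂ) (hz : 0 < z.im) (hz' : 0 < z'.im) :
    Integrable (fun v : ℝ × ℝ => (((v.1 : ℂ) - (z + v.2 * Complex.I)) ^ (2 * q + 2))⁻¹ *
        (((v.1 : ℂ) - ((starRingEnd ℂ) z' - v.2 * Complex.I)) ^ (2 * q + 2))⁻¹ *
          (v.2 : ℂ) ^ (2 * q)) (volume.prod (volume.restrict (Set.Ioi 0))) := by
  obtain ⟨A, hA, hA'⟩ := one_add_sq_le z.re z.im hz.ne'
  obtain ⟨B, hB, hB'⟩ := one_add_sq_le 0 z'.im hz'.ne'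
  have hdom := (integrable_inv_one_add_sq.mul_prod
    (integrable_inv_one_add_sq.restrict (s := Set.Ioi 0))).const_mul ((z.im⁻¹) ^ (2 * q) * (A * B))
  have hpos : ∀ᵐ v : ℝ × ℝ ∂(volume.prod (volume.restrict (Set.Ioi 0))), 0 < v.2 :=
    Measure.quasiMeasurePreserving_snd.ae (ae_restrict_mem measurableSet_Ioi)
  refine hdom.mono' (Measurable.aestronglyMeasurable (by fun_prop)) (hpos.mono ?_)
  rintro ⟨x, y⟩ hy
  simp only at hy ⊢
  set u : ℂ := (x : ℂ) - (z + y * Complex.I) with hu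
  set v : ℂ := (x : ℂ) - ((starRingEnd ℂ) z' - y * Complex.I) with hv
  have u2 : ‖u‖ ^ 2 = (x - z.re) ^ 2 + (z.im + y) ^ 2 := by
    rw [Complex.sq_norm, Complex.normSq_apply]; simp [hu]; ring
  have v2 : ‖v‖ ^ 2 = (x - z'.re) ^ 2 + (z'.im + y) ^ 2 := by
    rw [Complex.sq_norm, Complex.normSq_apply]; simp [hv]; ring
  have u1 : z.im ≤ ‖u‖ :=
    abs_le_of_sq_le_sq' (by nlinarith [sq_nonneg (x - z.re)]) (norm_nonneg _) |>.2
  have v1 : y ≤ ‖v‖ :=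
    abs_le_of_sq_le_sq' (by nlinarith [sq_nonneg (x - z'.re)]) (norm_nonneg _) |>.2
  have u0 : 0 < ‖u‖ := hz.trans_le u1
  have v0 : 0 < ‖v‖ := hy.trans_le v1
  have hue : (‖u‖ ^ 2)⁻¹ ≤ A * (1 + x ^ 2)⁻¹ := by
    rw [inv_le_iff_one_le_mul₀ (by positivity), mul_assoc, ← div_eq_inv_mul, ← mul_div_assoc,
      one_le_div (by positivity), u2]
    exact hA' x _ (by nlinarith)
  have hve : (‖v‖ ^ 2)⁻¹ ≤ B * (1 + y ^ 2)⁻¹ := by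
    rw [inv_le_iff_one_le_mul₀ (by positivity), mul_assoc, ← div_eq_inv_mul, ← mul_div_assoc,
      one_le_div (by positivity)]
    refine (hB' y _ le_rfl).trans ?_
    rw [v2]
    exact mul_le_mul_of_nonneg_left (by nlinarith [sq_nonneg (x - z'.re)]) hB.le
  have hr : ‖u‖⁻¹ * (y / ‖v‖) ≤ z.im⁻¹ := by
    calc _ ≤ z.im⁻¹ * 1 := by
          gcongr
          exact (div_le_one v0).2 v1
      _ = _ := mul_one _
  calc _ = (‖u‖⁻¹ * (y / ‖v‖)) ^ (2 * q) * ((‖u‖ ^ 2)⁻¹ * (‖v‖ ^ 2)⁻¹) := by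
        simp only [norm_mul, norm_inv, norm_pow, Complex.norm_real, Real.norm_eq_abs,
          abs_of_pos hy, div_eq_mul_inv, mul_pow, mul_inv, pow_add, inv_pow]
        ring
    _ ≤ (z.im⁻¹) ^ (2 * q) * ((A * (1 + x ^ 2)⁻¹) * (B * (1 + y ^ 2)⁻¹)) := by gcongr
    _ = _ := by ring

/-- Self-reproducing identity for the explicit Bergman kernel of the weighted Bergman
space of weight `2p` on the upper half-plane:
`c_p ∫_ℍ (z - conj w)^{-2p} (w - conj z')^{-2p} (Im w)^{2p-2} dA(w) = (z - conj z')^{-2p}`,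
where `c_p = (-1)^p 2^{2p-2} (2p-1) / π`. -/
theorem stmt_11 (p : ℕ) (hp : 1 ≤ p) (z z' : ℂ) (hz : 0 < z.im) (hz' : 0 < z'.im) :
    ((-1 : ℂ) ^ p * 2 ^ (2 * p - 2) * (2 * (p : ℂ) - 1) / (π : ℂ)) *
      ∫ w in {w : ℂ | 0 < w.im},
        ((z - (starRingEnd ℂ) w) ^ (2 * p))⁻¹ * ((w - (starRingEnd ℂ) z') ^ (2 * p))⁻¹ *
          ((w.im : ℂ)) ^ (2 * p - 2)
      = ((z - (starRingEnd ℂ) z') ^ (2 * p))⁻¹ := by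
  obtain ⟨q, rfl⟩ : ∃ q, p = q + 1 := ⟨p - 1, by omega⟩
  rw [show 2 * (q + 1) - 2 = 2 * q by omega, show 2 * (q + 1) = 2 * q + 2 by ring]
  set s : ℂ := z - (starRingEnd ℂ) z' with hs
  have hsim : 0 < s.im := by simp [hs]; linarith
  have hs0 : s ≠ 0 := fun h => by simp [h] at hsim
  set g : ℝ × ℝ → ℂ := fun v => (((v.1 : ℂ) - (z + v.2 * Complex.I)) ^ (2 * q + 2))⁻¹ *
        (((v.1 : ℂ) - ((starRingEnd ℂ) z' - v.2 * Complex.I)) ^ (2 * q + 2))⁻¹ *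
          (v.2 : ℂ) ^ (2 * q) with hg
  have hint : Integrable g (volume.prod (volume.restrict (Set.Ioi 0))) :=
    integrable_kernel q z z' hz hz'
  have e1 : ∫ w in {w : ℂ | 0 < w.im},
        ((z - (starRingEnd ℂ) w) ^ (2 * q + 2))⁻¹ *
          ((w - (starRingEnd ℂ) z') ^ (2 * q + 2))⁻¹ * ((w.im : ℂ)) ^ (2 * q) =
      ∫ v in Set.univ ×ˢ Set.Ioi 0, g v := by
    rw [← Complex.volume_preserving_equiv_real_prod.setIntegral_preimage_emb
      Complex.measurableEquivRealProd.measurableEmbedding]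
    have hset : Complex.measurableEquivRealProd ⁻¹' (Set.univ ×ˢ Set.Ioi 0) =
        {w : ℂ | 0 < w.im} := by
      ext w
      simp
    rw [hset]
    congr 1 with w
    simp only [hg, Complex.measurableEquivRealProd_apply]
    -- The sign in `z - conj w = -(x - a)` disappears in the even power.
    have w1 : (w.re : ℂ) - (z + w.im * Complex.I) = -(z - (starRingEnd ℂ) w) := by
      apply Complex.ext <;> simp
      ring
    have w2 : (w.re : ℂ) - ((starRingEnd ℂ) z' - w.im * Complex.I) = w - (starRingEnd ℂ) z' := by
      apply Complex.ext <;> simp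
    rw [w1, w2, Even.neg_pow ⟨q + 1, by ring⟩]
  have e2 : ∫ v in Set.univ ×ˢ Set.Ioi 0, g v =
      ∫ y : ℝ in Set.Ioi 0, ∫ x : ℝ, g (x, y) := by
    rw [← integral_prod_symm g hint, Measure.volume_eq_prod, ← Measure.prod_restrict,
      Measure.restrict_univ]
  have e3 : ∫ y : ℝ in Set.Ioi 0, ∫ x : ℝ, g (x, y) =
      ∫ y : ℝ in Set.Ioi 0, (-(2 * π * Complex.I) * ((2 * q + 1 + (2 * q + 1)).factorial /
        ((2 * q + 1).factorial * (2 * q + 1).factorial))) *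
        ((y : ℂ) ^ (2 * q) * ((s + 2 * Complex.I * y) ^ (2 * q + (2 * q + 1) + 2))⁻¹) := by
    refine setIntegral_congr_fun measurableSet_Ioi fun y hy => ?_
    have hy0 : 0 < y := hy
    have h := integral_line (a := z + y * Complex.I) (b := (starRingEnd ℂ) z' - y * Complex.I)
      (by simp; linarith) (by simp; linarith) (2 * q + 1) (2 * q + 1)
    simp only [hg]
    rw [integral_mul_const, show 2 * q + 2 = 2 * q + 1 + 1 by ring, h,
      show z + y * Complex.I - ((starRingEnd ℂ) z' - y * Complex.I) = s + 2 * Complex.I * y by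
        rw [hs]; ring, Odd.neg_one_pow ⟨q, rfl⟩,
      show 2 * q + (2 * q + 1) + 2 = 2 * q + 1 + (2 * q + 1) + 1 by ring]
    ring
  rw [e1, e2, e3, integral_const_mul, integral_ray hsim]
  have f1 : (((2 * q).factorial : ℕ) : ℂ) ≠ 0 := by exact_mod_cast (2 * q).factorial_ne_zero
  have f2 : (((2 * q + (2 * q + 1) + 1).factorial : ℕ) : ℂ) ≠ 0 := by
    exact_mod_cast Nat.factorial_ne_zero _
  have hπ : (π : ℂ) ≠ 0 := by exact_mod_cast Real.pi_ne_zero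
  have hq : (2 * q : ℂ) + 1 ≠ 0 := by exact_mod_cast (2 * q).succ_ne_zero
  have hI : (2 * Complex.I) ^ (2 * q + 1) = 2 ^ (2 * q) * (-1) ^ q * (2 * Complex.I) := by
    rw [pow_succ, mul_pow, pow_mul Complex.I, Complex.I_sq]
  have hI0 := Complex.I_ne_zero
  rw [hI, show 2 * q + 1 + (2 * q + 1) = 2 * q + (2 * q + 1) + 1 by ring,
    Nat.factorial_succ (2 * q)]
  push_cast
  rw [show 2 * ((q : ℂ) + 1) - 1 = 2 * q + 1 by ring, pow_succ (-1 : ℂ) q]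
  have hneg : (-1 : ℂ) ^ q ≠ 0 := pow_ne_zero _ (by norm_num)
  field_simp
end
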